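/- arXiv:1208.2747 — 3 statements merged into one kernel-verified Lean document; each statement's English description precedes it below -/
import Mathlib

section
/- There exists a language in shuffleCFL that belongs neither to PCCFL nor to traceCFL. -/
/-- `IsInterleaving w v u` means `u` is an interleaving of `w` and `v`. -/
inductive IsInterleaving {α : Type} : List α → List α → List α → Prop
  | nil : IsInterleaving [] [] []
  | left {a : α} {w v u : List α} : IsInterleaving w v u → IsInterleaving (a :: w) v (a :: u)
  | right {a : α} {w v u : List α} : IsInterleaving w v u → IsInterleaving w (a :: v) (a :: u)

/-- Shuffle of two languages. -/
def shuffleLang {α : Type} (L K : Set (List α)) : Set (List α) :=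
  {u | ∃ w ∈ L, ∃ v ∈ K, IsInterleaving w v u}

/-- A partially-commutative context-free grammar in Greibach form. -/
structure PCGrammar (α : Type) : Type 1 where
  V : Type
  finV : Finite V
  start : V
  prods : Set (V × α × List V)
  finP : prods.Finite
  indep : V → V → Prop
  indep_symm : ∀ {X Y : V}, indep X Y → indep Y X
  indep_irrefl : ∀ X : V, ¬ indep X X

/-- `PCDerives G γ w` : configuration `γ` derives the empty configuration producing word `w`,
using production steps (at the head) and swap steps of independent adjacent nonterminals. -/
inductive PCDerives {α : Type} (G : PCGrammar α) : List G.V → List α → Prop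
  | nil : PCDerives G [] []
  | prod {X : G.V} {a : α} {γ β : List G.V} {w : List α} :
      (X, a, γ) ∈ G.prods → PCDerives G (γ ++ β) w → PCDerives G (X :: β) (a :: w)
  | swap {η β : List G.V} {X Y : G.V} {w : List α} :
      G.indep X Y → PCDerives G (η ++ Y :: X :: β) w → PCDerives G (η ++ X :: Y :: β) w

/-- The language generated by a PC-grammar. -/
def PCGrammar.lang {α : Type} (G : PCGrammar α) : Set (List α) :=
  {w | PCDerives G [G.start] w}

/-- The class of partially-commutative context-free languages. -/
def IsPCCFL {α : Type} (L : Set (List α)) : Prop :=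
  ∃ G : PCGrammar α, G.lang = L

/-- The dependence relation (complement of independence) is transitive. -/
def PCGrammar.depTransitive {α : Type} (G : PCGrammar α) : Prop :=
  ∀ X Y Z : G.V, ¬ G.indep X Y → ¬ G.indep Y Z → ¬ G.indep X Z

/-- The subclass of PCCFL given by grammars with transitive dependence. -/
def IsTrPCCFL {α : Type} (L : Set (List α)) : Prop :=
  ∃ G : PCGrammar α, G.depTransitive ∧ G.lang = L

/-- Terms of a PA-grammar (shuffle context-free grammar). -/
inductive PATerm (V : Type) : Type
  | eps : PATerm V
  | var (X : V) : PATerm V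
  | seq (t u : PATerm V) : PATerm V
  | par (t u : PATerm V) : PATerm V

/-- Structural equivalence of PA-terms: associativity of both compositions,
commutativity of parallel composition, and neutrality of the empty term. -/
inductive PAEq {V : Type} : PATerm V → PATerm V → Prop
  | refl (t : PATerm V) : PAEq t t
  | symm {t u : PATerm V} : PAEq t u → PAEq u t
  | trans {t u v : PATerm V} : PAEq t u → PAEq u v → PAEq t v
  | seq_assoc (t u v : PATerm V) : PAEq ((t.seq u).seq v) (t.seq (u.seq v))
  | par_assoc (t u v : PATerm V) : PAEq ((t.par u).par v) (t.par (u.par v))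
  | par_comm (t u : PATerm V) : PAEq (t.par u) (u.par t)
  | seq_eps_left (t : PATerm V) : PAEq (PATerm.eps.seq t) t
  | seq_eps_right (t : PATerm V) : PAEq (t.seq PATerm.eps) t
  | par_eps (t : PATerm V) : PAEq (t.par PATerm.eps) t
  | seq_congr {t t' u u' : PATerm V} : PAEq t t' → PAEq u u' → PAEq (t.seq u) (t'.seq u')
  | par_congr {t t' u u' : PATerm V} : PAEq t t' → PAEq u u' → PAEq (t.par u) (t'.par u')

/-- Single steps of a PA-grammar with production set `P`. -/
inductive PAStep {V α : Type} (P : Set (V × α × PATerm V)) : PATerm V → α → PATerm V → Prop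
  | prod {X : V} {a : α} {t : PATerm V} : (X, a, t) ∈ P → PAStep P (PATerm.var X) a t
  | seq_left {t t' u : PATerm V} {a : α} : PAStep P t a t' → PAStep P (t.seq u) a (t'.seq u)
  | par_left {t t' u : PATerm V} {a : α} : PAStep P t a t' → PAStep P (t.par u) a (t'.par u)
  | par_right {t u u' : PATerm V} {a : α} : PAStep P u a u' → PAStep P (t.par u) a (t.par u')

/-- `PAGen P t w` : term `t` derives the empty term producing word `w`
(terms are considered up to structural equivalence). -/
inductive PAGen {V α : Type} (P : Set (V × α × PATerm V)) : PATerm V → List α → Prop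
  | done : PAGen P PATerm.eps []
  | eqv {t t' : PATerm V} {w : List α} : PAEq t t' → PAGen P t' w → PAGen P t w
  | step {t t' : PATerm V} {a : α} {w : List α} :
      PAStep P t a t' → PAGen P t' w → PAGen P t (a :: w)

/-- A PA-grammar (shuffle context-free grammar). -/
structure PAGrammar (α : Type) : Type 1 where
  V : Type
  finV : Finite V
  start : V
  prods : Set (V × α × PATerm V)
  finP : prods.Finite

/-- The language generated by a PA-grammar. -/
def PAGrammar.lang {α : Type} (G : PAGrammar α) : Set (List α) :=
  {w | PAGen G.prods (PATerm.var G.start) w}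

/-- The class of languages of PA-grammars (context-free grammars with shuffle). -/
def IsShuffleCFL {α : Type} (L : Set (List α)) : Prop :=
  ∃ G : PAGrammar α, G.lang = L

/-- A single swap of two adjacent letters independent according to `J`. -/
inductive AdjSwap {α : Type} (J : α → α → Prop) : List α → List α → Prop
  | swap (x y : List α) {a b : α} : J a b → AdjSwap J (x ++ a :: b :: y) (x ++ b :: a :: y)

/-- Trace equivalence: finitely many swaps of adjacent independent letters. -/
def TraceEquiv {α : Type} (J : α → α → Prop) : List α → List α → Prop :=
  Relation.ReflTransGen (AdjSwap J)

/-- Trace closure of a language with respect to letter-independence `J`. -/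
def traceClosure {α : Type} (J : α → α → Prop) (L : Set (List α)) : Set (List α) :=
  {w | ∃ v ∈ L, TraceEquiv J v w}

/-- The class of trace closures of context-free languages. -/
def IsTraceCFL {α : Type} (L : Set (List α)) : Prop :=
  ∃ J : α → α → Prop, (∀ a b, J a b → J b a) ∧ (∀ a, ¬ J a a) ∧
    ∃ L₀ : Language α, L₀.IsContextFree ∧ traceClosure J L₀ = L

/-- `listPow s m` is the word `s^m`. -/
def listPow {α : Type} (s : List α) (m : ℕ) : List α :=
  (List.replicate m s).flatten

/-- The shuffle-pumping condition. -/
def ShufflePumping {α : Type} (L : Set (List α)) : Prop :=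
  ∃ N : ℕ, ∀ w ∈ L, w.length > N →
    ∃ x y z s t : List α,
      (∃ yt u : List α, IsInterleaving y t yt ∧ IsInterleaving (s ++ yt) z u ∧ w = x ++ u) ∧
      1 ≤ s.length ∧ (s ++ y ++ t).length ≤ N ∧
      ∀ m : ℕ, x ++ listPow s m ++ y ++ listPow t m ++ z ∈ L

/-- The concatenation-pumping condition. -/
def ConcatPumping {α : Type} (L : Set (List α)) : Prop :=
  ∃ N : ℕ, ∀ w ∈ L, w.length > N →
    ∃ x y z s t : List α,
      w = x ++ y ++ z ∧
      1 ≤ (s ++ t).length ∧ (s ++ t).length ≤ N ∧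
      ∀ m : ℕ, x ++ listPow s m ++ y ++ listPow t m ++ z ∈ L

/-!
The separating language is that of the shuffle grammar `X → a (X ∥ Y) B | x`, `Y → y`, `B → b`. It
contains `aⁿ yⁿ x bⁿ`.

If it is the trace closure of a context-free language `L₀`, then `x` and `y` are the only letters
that may be independent, so `L₀` contains `aⁿ u bⁿ` for some arrangement `u` of `yⁿ x`. By the
pumping lemma a short infix of this word can be replaced by a shorter one. But in a word of the
language, an infix without `a`s or without `b`s is as short as any infix that can take its place.

Suppose a partially-commutative grammar generates the language. Whatever an entry of a configuration
generates, its surplus of `y`s over `b`s is the same, which gives every entry a weight. While `aⁿ`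
is generated, the weight of any prefix of the configuration that includes the entry responsible for
the `x` stays bounded, because the right-hand side of a production goes in front of everything else.
To generate `yⁿ x bⁿ` from there, almost all `b`s have to come from the entries behind that of the
`x`, and those of them that contribute to `yⁿ` have no `b`s and are independent of the entries
without a `y` in front of them. By pigeonhole, some block of entries has many `b`s although each
nonterminal of its entries without a `y` already occurs on such an entry before the block. So inside
the block the entries without a `y` are independent of those with one and can be moved to its
front, where they generate more `b`s than the weight of the prefix before the block permits.
-/

theorem append_cons_eq_append_cons {β : Type*} {l₁ l₂ m₁ m₂ : List β} {a b : β}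
    (h : l₁ ++ a :: l₂ = m₁ ++ b :: m₂) :
    (l₁ = m₁ ∧ a = b ∧ l₂ = m₂) ∨ (∃ l, m₁ = l₁ ++ a :: l ∧ l₂ = l ++ b :: m₂) ∨
      ∃ l, l₁ = m₁ ++ b :: l ∧ m₂ = l ++ a :: l₂ := by
  rcases List.append_eq_append_iff.1 h with ⟨_ | ⟨d, l⟩, rfl, hl⟩ | ⟨_ | ⟨d, l⟩, rfl, hl⟩ <;> grind

theorem prefix_append_cases {β : Type*} {P l m : List β} (h : P <+: l ++ m) :
    P <+: l ∨ ∃ Q, P = l ++ Q ∧ Q <+: m := by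
  obtain ⟨R, h⟩ := h
  rcases List.append_eq_append_iff.1 h with ⟨Q, rfl, -⟩ | ⟨Q, rfl, rfl⟩
  exacts [.inl ⟨Q, rfl⟩, .inr ⟨Q, rfl, R, rfl⟩]

theorem append_cons_cons_eq_append_cons {β : Type*} {l₁ l₂ m₁ m₂ : List β} {a b c : β}
    (h : l₁ ++ a :: b :: l₂ = m₁ ++ c :: m₂) :
    (m₁ = l₁ ∧ c = a ∧ m₂ = b :: l₂) ∨ (m₁ = l₁ ++ [a] ∧ c = b ∧ m₂ = l₂) ∨
      (∃ l, m₁ = l₁ ++ a :: b :: l ∧ l₂ = l ++ c :: m₂) ∨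
      ∃ l, l₁ = m₁ ++ c :: l ∧ m₂ = l ++ a :: b :: l₂ := by
  rcases List.append_eq_append_iff.1 h with
    ⟨_ | ⟨d, _ | ⟨e, l⟩⟩, rfl, hl⟩ | ⟨_ | ⟨d, l⟩, rfl, hl⟩ <;> grind

/-- A block of consecutive elements can be chosen heavy and such that the labels of its
`p`-elements already occur on earlier `p`-elements: either no element before the first with a label
in `T` makes up such a block, or one passes to the elements behind it and drops its label from `T`.
-/
theorem exists_heavy_infix_of_le_sum {β V : Type*} (f : β → V) (p : β → Prop)
    (g : β → ℕ) {κ E : ℕ} (T : Finset V) (Γ : List β) (hg : ∀ c ∈ Γ, g c ≤ E)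
    (hΓ : (T.card + 1) * (κ + 1 + E) ≤ (Γ.map g).sum) :
    ∃ P Q R, Γ = P ++ (Q ++ R) ∧ (∀ c ∈ Q, p c → f c ∈ T → ∃ d ∈ P, p d ∧ f d = f c) ∧
      κ < (Q.map g).sum := by
  classical
  induction T using Finset.strongInduction generalizing Γ with
  | H T ih =>
    cases hfind : Γ.find? fun c => p c ∧ f c ∈ T with
    | none =>
      simp only [List.find?_eq_none, decide_eq_true_eq, not_and] at hfind
      refine ⟨[], Γ, [], by simp, fun c hc hp hT => absurd hT (hfind c hc hp), ?_⟩
      nlinarith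
    | some c =>
      obtain ⟨hc, Q, S, rfl, hQ⟩ := List.find?_eq_some_iff_append.1 hfind
      simp only [decide_eq_true_eq, Bool.not_eq_true', decide_eq_false_iff_not] at hc hQ
      by_cases hκ : κ < (Q.map g).sum
      · exact ⟨[], Q, c :: S, rfl, fun d hd hp hT => absurd ⟨hp, hT⟩ (hQ d hd), hκ⟩
      have hcard := Finset.card_erase_add_one hc.2
      have hgc := hg c (by simp)
      obtain ⟨P, Q', R, rfl, hQ', hκ'⟩ := ih (T.erase (f c)) (Finset.erase_ssubset hc.2) S
        (fun d hd => hg d (by simp [hd])) (by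
          simp only [List.map_append, List.map_cons, List.sum_append, List.sum_cons] at hΓ
          rw [hcard]
          linarith)
      refine ⟨Q ++ c :: P, Q', R, by simp, fun d hd hp hT => ?_, hκ'⟩
      by_cases hdc : f d = f c
      · exact ⟨c, by simp, hc.1, hdc.symm⟩
      · obtain ⟨e, he, hpe⟩ := hQ' d hd hp (Finset.mem_erase.2 ⟨hdc, hT⟩)
        exact ⟨e, by simp [he], hpe⟩

section Interleaving

variable {α : Type}

namespace IsInterleaving

theorem comm {w v u : List α} (h : IsInterleaving w v u) : IsInterleaving v w u := by
  induction h with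
  | nil => exact .nil
  | left _ ih => exact .right ih
  | right _ ih => exact .left ih

theorem exists_assoc {w v u z t : List α} (h : IsInterleaving w v u) (h' : IsInterleaving u z t) :
    ∃ s, IsInterleaving v z s ∧ IsInterleaving w s t := by
  induction h' generalizing w v with
  | nil => cases h; exact ⟨[], .nil, .nil⟩
  | left _ ih =>
    cases h with
    | left h =>
      obtain ⟨s, hvz, hws⟩ := ih h
      exact ⟨s, hvz, .left hws⟩
    | right h =>
      obtain ⟨s, hvz, hws⟩ := ih h
      exact ⟨_, .left hvz, .right hws⟩
  | right _ ih =>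
    obtain ⟨s, hvz, hws⟩ := ih h
    exact ⟨_, .right hvz, .right hws⟩

theorem nil_right (w : List α) : IsInterleaving w [] w := by
  induction w with
  | nil => exact .nil
  | cons _ _ ih => exact .left ih

theorem append_cons (p q : List α) (l : α) : IsInterleaving (p ++ q) [l] (p ++ l :: q) := by
  induction p with
  | nil => exact .right (nil_right q)
  | cons _ _ ih => exact .left ih

theorem perm {w v u : List α} (h : IsInterleaving w v u) : u.Perm (w ++ v) := by
  induction h with
  | nil => exact .refl _
  | left _ ih => exact ih.cons _
  | right _ ih => exact (ih.cons _).trans List.perm_middle.symm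

theorem eq_of_nil_right {w u : List α} (h : IsInterleaving w [] u) : u = w := by
  generalize hv : ([] : List α) = v at h
  induction h with
  | nil => rfl
  | left _ ih => rw [ih hv]
  | right => contradiction

theorem exists_split {w v p q : List α} (h : IsInterleaving w v (p ++ q)) :
    ∃ w₁ w₂ v₁ v₂, w = w₁ ++ w₂ ∧ v = v₁ ++ v₂ ∧
      IsInterleaving w₁ v₁ p ∧ IsInterleaving w₂ v₂ q := by
  induction p generalizing w v with
  | nil => exact ⟨[], w, [], v, rfl, rfl, .nil, h⟩
  | cons c p ih =>
    cases h with
    | left h =>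
      obtain ⟨w₁, w₂, v₁, v₂, rfl, rfl, hp, hq⟩ := ih h
      exact ⟨c :: w₁, w₂, v₁, v₂, rfl, rfl, .left hp, hq⟩
    | right h =>
      obtain ⟨w₁, w₂, v₁, v₂, rfl, rfl, hp, hq⟩ := ih h
      exact ⟨w₁, w₂, c :: v₁, v₂, rfl, rfl, .right hp, hq⟩

end IsInterleaving

theorem shuffleLang_comm (L K : Set (List α)) : shuffleLang L K = shuffleLang K L := by
  ext u
  constructor <;> exact fun ⟨w, hw, v, hv, h⟩ => ⟨v, hv, w, hw, h.comm⟩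

theorem shuffleLang_assoc (L K M : Set (List α)) :
    shuffleLang (shuffleLang L K) M = shuffleLang L (shuffleLang K M) := by
  have subset (L K M : Set (List α)) :
      shuffleLang (shuffleLang L K) M ⊆ shuffleLang L (shuffleLang K M) := by
    rintro t ⟨u, ⟨w, hw, v, hv, hu⟩, z, hz, ht⟩
    obtain ⟨s, hs, ht⟩ := hu.exists_assoc ht
    exact ⟨w, hw, s, ⟨v, hv, z, hz, hs⟩, ht⟩
  apply (subset L K M).antisymm
  rw [shuffleLang_comm L, shuffleLang_comm K, shuffleLang_comm _ M, shuffleLang_comm L]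
  exact subset M K L

theorem shuffleLang_singleton_nil (L : Set (List α)) : shuffleLang L {[]} = L := by
  ext u
  constructor
  · rintro ⟨w, hw, _, rfl, h⟩
    rwa [h.eq_of_nil_right]
  · exact fun hu => ⟨u, hu, [], rfl, .nil_right u⟩

end Interleaving

section PAGrammars

variable {V α : Type} {P : Set (V × α × PATerm V)}

/-- The language denoted by a term when every nonterminal `X` is interpreted as `ρ X`. -/
def PATerm.lang (ρ : V → Set (List α)) : PATerm V → Set (List α)
  | .eps => {[]}
  | .var X => ρ X
  | .seq t u => Set.image2 (· ++ ·) (t.lang ρ) (u.lang ρ)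
  | .par t u => shuffleLang (t.lang ρ) (u.lang ρ)

theorem PAEq.lang_eq (ρ : V → Set (List α)) {t u : PATerm V} (h : PAEq t u) :
    t.lang ρ = u.lang ρ := by
  induction h with
  | refl => rfl
  | symm _ ih => exact ih.symm
  | trans _ _ ih₁ ih₂ => exact ih₁.trans ih₂
  | seq_assoc => exact Set.image2_assoc List.append_assoc
  | par_assoc => exact shuffleLang_assoc _ _ _
  | par_comm => exact shuffleLang_comm _ _
  | seq_eps_left => simp [PATerm.lang]
  | seq_eps_right => simp [PATerm.lang]
  | par_eps => exact shuffleLang_singleton_nil _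
  | seq_congr _ _ ih₁ ih₂ => simp only [PATerm.lang, ih₁, ih₂]
  | par_congr _ _ ih₁ ih₂ => simp only [PATerm.lang, ih₁, ih₂]

theorem PAStep.cons_mem_lang {ρ : V → Set (List α)}
    (hρ : ∀ X l t, (X, l, t) ∈ P → ∀ w ∈ t.lang ρ, l :: w ∈ ρ X)
    {t t' : PATerm V} {l : α} (h : PAStep P t l t') :
    ∀ w ∈ t'.lang ρ, l :: w ∈ t.lang ρ := by
  induction h with
  | prod hP => exact hρ _ _ _ hP
  | seq_left _ ih =>
    rintro _ ⟨w, hw, v, hv, rfl⟩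
    exact ⟨_, ih w hw, v, hv, rfl⟩
  | par_left _ ih =>
    rintro _ ⟨w, hw, v, hv, h⟩
    exact ⟨_, ih w hw, v, hv, .left h⟩
  | par_right _ ih =>
    rintro _ ⟨w, hw, v, hv, h⟩
    exact ⟨w, hw, _, ih v hv, .right h⟩

namespace PAGen

theorem mem_lang {ρ : V → Set (List α)}
    (hρ : ∀ X l t, (X, l, t) ∈ P → ∀ w ∈ t.lang ρ, l :: w ∈ ρ X)
    {t : PATerm V} {w : List α} (h : PAGen P t w) : w ∈ t.lang ρ := by
  induction h with
  | done => exact rfl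
  | eqv h _ ih => rwa [h.lang_eq ρ]
  | step h _ ih => exact h.cons_mem_lang hρ _ ih

theorem prod {X : V} {l : α} {t : PATerm V} {w : List α} (hP : (X, l, t) ∈ P)
    (h : PAGen P t w) : PAGen P (.var X) (l :: w) :=
  .step (.prod hP) h

theorem seq {t u : PATerm V} {w v : List α} (ht : PAGen P t w) (hu : PAGen P u v) :
    PAGen P (t.seq u) (w ++ v) := by
  induction ht with
  | done => exact .eqv (.seq_eps_left u) hu
  | eqv h _ ih => exact .eqv (.seq_congr h (.refl u)) ih
  | step h _ ih => exact .step (.seq_left h) ih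

theorem par {t u : PATerm V} {w v z : List α} (ht : PAGen P t w) (hu : PAGen P u v)
    (hz : IsInterleaving w v z) : PAGen P (t.par u) z := by
  induction ht generalizing u v z with
  | done =>
    rw [hz.comm.eq_of_nil_right]
    exact .eqv ((PAEq.par_comm _ _).trans (.par_eps u)) hu
  | eqv h _ ih => exact .eqv (.par_congr h (.refl u)) (ih hu hz)
  | step hstep ht ih =>
    induction hu generalizing z with
    | done =>
      rw [hz.eq_of_nil_right]
      exact .eqv (.par_eps _) (.step hstep ht)
    | eqv h _ ihu => exact .eqv (.par_congr (.refl _) h) (ihu hz)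
    | step hstep' hu ihu =>
      cases hz with
      | left hz => exact .step (.par_left hstep) (ih (.step hstep' hu) hz)
      | right hz => exact .step (.par_right hstep') (ihu hz)

end PAGen

end PAGrammars

section ContextFree

open Symbol

variable {T : Type} {g : ContextFreeGrammar T}

theorem derives_append {u u' v v' : List (Symbol T g.NT)} (hu : g.Derives u u')
    (hv : g.Derives v v') : g.Derives (u ++ v) (u' ++ v') :=
  (hu.append_right v).trans (hv.append_left u')

theorem derives_flatMap {ps : List (Symbol T g.NT × List T)}
    (h : ∀ c ∈ ps, g.Derives [c.1] (c.2.map terminal)) :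
    g.Derives (ps.map Prod.fst) ((ps.flatMap Prod.snd).map terminal) := by
  induction ps with
  | nil => exact .refl _
  | cons c ps ih =>
    rw [List.flatMap_cons, List.map_append]
    exact derives_append (h c List.mem_cons_self) (ih fun d hd => h d (List.mem_cons_of_mem c hd))

/-- `v` is the yield of an occurrence of the nonterminal `A` in a derivation of `w` from `s`. -/
def IsSubyield (g : ContextFreeGrammar T) (s : List (Symbol T g.NT)) (w : List T) (A : g.NT)
    (v : List T) : Prop :=
  ∃ p q, w = p ++ v ++ q ∧
    g.Derives s (p.map terminal ++ [nonterminal A] ++ q.map terminal) ∧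
    g.Derives [nonterminal A] (v.map terminal)

theorem exists_subyield_or_exists_short_yields {B m : ℕ} (hB : 1 ≤ B)
    (hm : ∀ r ∈ g.rules, r.output.length ≤ m) {s : List (Symbol T g.NT)} {w : List T}
    (h : g.Derives s (w.map terminal)) :
    (∃ A v, IsSubyield g s w A v ∧ B < v.length ∧ v.length ≤ m * B) ∨
      ∃ ps : List (Symbol T g.NT × List T), ps.map Prod.fst = s ∧ ps.flatMap Prod.snd = w ∧
        ∀ c ∈ ps, g.Derives [c.1] (c.2.map terminal) ∧ c.2.length ≤ B := by
  induction h using Relation.ReflTransGen.head_induction_on with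
  | refl =>
    refine .inr ⟨w.map fun l => (terminal l, [l]), by simp, by simp [List.flatMap_map], ?_⟩
    simp only [List.mem_map]
    rintro _ ⟨l, -, rfl⟩
    exact ⟨.refl _, hB⟩
  | @head s s' hstep _ ih =>
    rcases ih with ⟨A, v, ⟨p, q, hw, hA, hv⟩, hlen⟩ | ⟨ps, hs', hw, hps⟩
    · exact .inl ⟨A, v, ⟨p, q, hw, hstep.trans_derives hA, hv⟩, hlen⟩
    obtain ⟨r, hr, hrew⟩ := hstep
    obtain ⟨p, q, rfl, rfl⟩ := ContextFreeRule.rewrites_iff.1 hrew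
    obtain ⟨ps', ps₃, rfl, hps', rfl⟩ := List.map_eq_append_iff.1 hs'
    obtain ⟨ps₁, ps₂, rfl, rfl, hr'⟩ := List.map_eq_append_iff.1 hps'
    simp only [List.mem_append, or_imp, forall_and] at hps
    obtain ⟨⟨⟨h₁, h₂⟩, h₃⟩, ⟨len₁, len₂⟩, len₃⟩ := hps
    have hyield : g.Derives [nonterminal r.input] ((ps₂.flatMap Prod.snd).map terminal) := by
      have hr_derives : g.Derives [nonterminal r.input] r.output :=
        ContextFreeGrammar.Produces.single ⟨r, hr, ContextFreeRule.Rewrites.input_output⟩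
      exact hr_derives.trans (hr' ▸ derives_flatMap h₂)
    by_cases hlen : (ps₂.flatMap Prod.snd).length ≤ B
    · refine .inr ⟨ps₁ ++ [(nonterminal r.input, ps₂.flatMap Prod.snd)] ++ ps₃, by simp,
        by simp [← hw], ?_⟩
      simp only [List.mem_append, List.mem_singleton]
      rintro c ((hc | rfl) | hc)
      exacts [⟨h₁ c hc, len₁ c hc⟩, ⟨hyield, hlen⟩, ⟨h₃ c hc, len₃ c hc⟩]
    · refine .inl ⟨r.input, ps₂.flatMap Prod.snd,
        ⟨ps₁.flatMap Prod.snd, ps₃.flatMap Prod.snd, by simp [← hw], ?_, hyield⟩, by omega, ?_⟩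
      · exact derives_append (derives_append (derives_flatMap h₁) (.refl _)) (derives_flatMap h₃)
      · have hsum := List.sum_le_card_nsmul (ps₂.map fun c => c.2.length) B
          (List.forall_mem_map.2 len₂)
        rw [← List.length_flatMap, List.length_map, smul_eq_mul] at hsum
        have : ps₂.length ≤ m := by simpa [← hr'] using hm r hr
        exact hsum.trans (Nat.mul_le_mul_right B this)

theorem exists_short_yields (g : ContextFreeGrammar T) :
    ∃ K : ℕ, ∀ (A : g.NT) (v : List T), g.Derives [nonterminal A] (v.map terminal) →
      ∃ v' : List T, g.Derives [nonterminal A] (v'.map terminal) ∧ v'.length ≤ K := by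
  let yield (A : g.NT) : List T :=
    Classical.epsilon fun v : List T => g.Derives [nonterminal A] (v.map terminal)
  obtain ⟨K, hK⟩ := (g.rules.finite_toSet.image fun r => (yield r.input).length).bddAbove
  refine ⟨K, fun A v hv => ⟨yield A, ?_, ?_⟩⟩
  · exact Classical.epsilon_spec (p := fun v : List T => g.Derives [nonterminal A] (v.map terminal))
      ⟨v, hv⟩
  · obtain ⟨r, hr, rfl⟩ : ∃ r ∈ g.rules, r.input = A := by
      by_contra! hA
      refine ContextFreeGrammar.derives_nonterminal hA _ (fun h => ?_) hv
      cases v <;> simp at h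
    exact hK ⟨r, hr, rfl⟩

/-- The shrinking half of the pumping lemma for context-free languages. -/
theorem exists_shorter_infix_of_isContextFree {L : Language T} (hL : L.IsContextFree) :
    ∃ M, ∀ w ∈ L, M < w.length → ∃ p v v' q, w = p ++ v ++ q ∧ p ++ v' ++ q ∈ L ∧
      v'.length < v.length ∧ v.length ≤ M := by
  obtain ⟨g, rfl⟩ := hL
  obtain ⟨K, hK⟩ := exists_short_yields g
  obtain ⟨m, hm⟩ := (g.rules.finite_toSet.image fun r => r.output.length).bddAbove
  refine ⟨(m + 1) * (K + 1), fun w hw hlen => ?_⟩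
  rw [g.mem_language_iff] at hw
  rcases exists_subyield_or_exists_short_yields (B := K + 1) (by omega)
    (fun r hr => hm ⟨r, hr, rfl⟩) hw with ⟨A, v, ⟨p, q, rfl, hA, hv⟩, hlt, hle⟩ | ⟨ps, hs, rfl, hps⟩
  · obtain ⟨v', hv', hlen'⟩ := hK A v hv
    refine ⟨p, v, v', q, rfl, ?_, by omega, hle.trans (Nat.mul_le_mul_right _ (by omega))⟩
    rw [g.mem_language_iff, List.map_append, List.map_append]
    exact hA.trans ((hv'.append_left _).append_right _)
  · obtain ⟨c, rfl⟩ : ∃ c, ps = [c] :=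
      List.length_eq_one_iff.1 (by simpa using congrArg List.length hs)
    have := (hps c List.mem_cons_self).2
    simp only [List.flatMap_cons, List.flatMap_nil, List.append_nil] at hlen
    nlinarith

end ContextFree

section PCGrammars

variable {α : Type} {G : PCGrammar α}

namespace PCDerives

theorem append {γ β : List G.V} {w v : List α} (hγ : PCDerives G γ w) (hβ : PCDerives G β v) :
    PCDerives G (γ ++ β) (w ++ v) := by
  induction hγ with
  | nil => exact hβ
  | prod hP _ ih =>
    rw [List.append_assoc] at ih
    exact .prod hP ih
  | swap hXY _ ih =>
    simp only [List.append_assoc, List.cons_append] at ih ⊢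
    exact .swap hXY ih

theorem append_cons_iff {ρ η ζ : List G.V} {X : G.V} {w : List α} (h : ∀ Z ∈ η, G.indep Z X) :
    PCDerives G (ρ ++ (η ++ X :: ζ)) w ↔ PCDerives G (ρ ++ X :: (η ++ ζ)) w := by
  induction η generalizing ρ with
  | nil => rfl
  | cons Z η ih =>
    rw [List.forall_mem_cons] at h
    have hη := ih (ρ := ρ ++ [Z]) h.2
    simp only [List.append_assoc, List.cons_append, List.nil_append] at hη ⊢
    rw [hη]
    exact ⟨.swap (G.indep_symm h.1), .swap h.1⟩

theorem filter_append_filter_iff {ι : Type} (f : ι → G.V) (p : ι → Prop) [DecidablePred p]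
    {Q : List ι} {ρ β : List G.V} {w : List α}
    (h : ∀ c ∈ Q, ∀ d ∈ Q, ¬ p c → p d → G.indep (f c) (f d)) :
    PCDerives G (ρ ++ ((Q.filter fun c => ¬ p c).map f ++ ((Q.filter fun c => p c).map f ++ β))) w ↔
      PCDerives G (ρ ++ (Q.map f ++ β)) w := by
  induction Q generalizing ρ with
  | nil => rfl
  | cons c Q ih =>
    have hQ := ih (ρ := ρ ++ [f c]) fun c hc d hd =>
      h c (List.mem_cons_of_mem _ hc) d (List.mem_cons_of_mem _ hd)
    simp only [List.append_assoc, List.cons_append, List.nil_append] at hQ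
    rw [List.map_cons, List.cons_append, ← hQ]
    by_cases hc : p c
    · simp only [hc, not_true_eq_false, decide_false, decide_true, List.filter_cons_of_pos,
        List.filter_cons_of_neg, Bool.false_eq_true, not_false_eq_true, List.map_cons,
        List.cons_append]
      refine append_cons_iff fun Z hZ => ?_
      obtain ⟨d, hd, rfl⟩ := List.mem_map.1 hZ
      obtain ⟨hdQ, hpd⟩ := List.mem_filter.1 hd
      exact h d (List.mem_cons_of_mem c hdQ) c List.mem_cons_self (by simpa using hpd) hc
    · simp [hc]

theorem exists_first_step {γ : List G.V} {l : α} {w : List α} (h : PCDerives G γ (l :: w)) :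
    ∃ η X ζ rhs, γ = η ++ X :: ζ ∧ (∀ Z ∈ η, G.indep Z X) ∧ (X, l, rhs) ∈ G.prods ∧
      PCDerives G (rhs ++ (η ++ ζ)) w := by
  generalize hu : l :: w = u at h
  induction h with
  | nil => contradiction
  | @prod X _ rhs β _ hP h =>
    obtain ⟨rfl, rfl⟩ := List.cons_eq_cons.1 hu
    exact ⟨[], X, β, rhs, rfl, by simp, hP, h⟩
  | @swap θ β X Y _ hXY _ ih =>
    obtain ⟨η, Z, ζ, rhs, heq, hη, hP, h⟩ := ih hu
    rcases append_cons_cons_eq_append_cons heq with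
      ⟨rfl, rfl, rfl⟩ | ⟨rfl, rfl, rfl⟩ | ⟨μ, rfl, rfl⟩ | ⟨μ, rfl, rfl⟩
    · refine ⟨η ++ [X], Z, β, rhs, by simp, ?_, hP, by simpa using h⟩
      simpa [or_imp, forall_and, hXY] using hη
    · exact ⟨θ, Z, Y :: ζ, rhs, rfl, fun V hV => hη V (List.mem_append_left _ hV), hP,
        by simpa using h⟩
    · refine ⟨θ ++ X :: Y :: μ, Z, ζ, rhs, by simp, ?_, hP, ?_⟩
      · exact fun V hV => hη V (((List.Perm.swap _ _ _).append_left θ).mem_iff.1 hV)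
      · have := PCDerives.swap (η := rhs ++ θ) (β := μ ++ ζ) hXY (by simpa using h)
        simpa using this
    · refine ⟨η, Z, μ ++ X :: Y :: β, rhs, by simp, hη, hP, ?_⟩
      have := PCDerives.swap (η := rhs ++ η ++ μ) (β := β) hXY (by simpa using h)
      simpa using this

end PCDerives

namespace PCGrammar

/-- A nonterminal together with a word it generates, recording what becomes of one entry of a
configuration in a derivation. -/
structure Yield (G : PCGrammar α) where
  nt : G.V
  word : List α
  derives : PCDerives G [nt] word

namespace Yield

theorem derives_map (Γ : List G.Yield) : PCDerives G (Γ.map nt) (Γ.flatMap word) := by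
  induction Γ with
  | nil => exact .nil
  | cons c Γ ih => exact c.derives.append ih

/-- The yield that starts with the production `X →^l α`, where the nonterminals of `α` have the
yields `Γ`. -/
def ofProd {X : G.V} {l : α} (Γ : List G.Yield) (hP : (X, l, Γ.map nt) ∈ G.prods) : G.Yield where
  nt := X
  word := l :: Γ.flatMap word
  derives := .prod hP (by simpa using derives_map Γ)

end Yield

/-- A word generated by `Z`, unspecified if `Z` generates no word. -/
noncomputable def someWord (G : PCGrammar α) (Z : G.V) : List α :=
  Classical.epsilon fun w => PCDerives G [Z] w

end PCGrammar

namespace PCDerives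

open PCGrammar

theorem exists_yields {γ : List G.V} {w : List α} (h : PCDerives G γ w) :
    ∃ Γ : List G.Yield, Γ.map Yield.nt = γ ∧ (Γ.flatMap Yield.word).Perm w := by
  induction h with
  | nil => exact ⟨[], rfl, .refl _⟩
  | prod hP _ ih =>
    obtain ⟨Γ, hΓ, hw⟩ := ih
    obtain ⟨Γ₁, Γ₂, rfl, rfl, rfl⟩ := List.map_eq_append_iff.1 hΓ
    exact ⟨.ofProd Γ₁ hP :: Γ₂, rfl, by simpa [Yield.ofProd] using hw⟩
  | swap _ _ ih =>
    obtain ⟨Γ, hΓ, hw⟩ := ih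
    obtain ⟨Γ₁, Γ₂, rfl, rfl, hΓ₂⟩ := List.map_eq_append_iff.1 hΓ
    obtain ⟨c, Γ₃, rfl, rfl, hΓ₃⟩ := List.map_eq_cons_iff.1 hΓ₂
    obtain ⟨d, Γ₄, rfl, rfl, rfl⟩ := List.map_eq_cons_iff.1 hΓ₃
    exact ⟨Γ₁ ++ d :: c :: Γ₄, by simp,
      (((List.Perm.swap c d Γ₄).append_left Γ₁).flatMap_right _).trans hw⟩

theorem productive {γ : List G.V} {w : List α} (h : PCDerives G γ w) :
    ∀ Z ∈ γ, ∃ v, PCDerives G [Z] v := by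
  obtain ⟨Γ, rfl, -⟩ := h.exists_yields
  exact List.forall_mem_map.2 fun c _ => ⟨c.word, c.derives⟩

theorem someWord {Z : G.V} (h : ∃ v, PCDerives G [Z] v) : PCDerives G [Z] (G.someWord Z) :=
  Classical.epsilon_spec h

theorem flatMap_someWord {γ : List G.V} (h : ∀ Z ∈ γ, ∃ v, PCDerives G [Z] v) :
    PCDerives G γ (γ.flatMap G.someWord) := by
  induction γ with
  | nil => exact .nil
  | cons Z γ ih =>
    rw [List.forall_mem_cons] at h
    exact (PCDerives.someWord h.1).append (ih h.2)

/-- The entry that emits a `y` is independent of every entry in front of it, and these entries are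
still there if they have no `y` of their own. -/
theorem exists_yields_of_replicate_append {γ : List G.V} {y : α} {i : ℕ} {v : List α}
    (h : PCDerives G γ (List.replicate i y ++ v)) (hv : y ∉ v) :
    ∃ Γ : List G.Yield, Γ.map Yield.nt = γ ∧
      (Γ.flatMap Yield.word).Perm (List.replicate i y ++ v) ∧
      Γ.Pairwise (fun c d => y ∉ c.word → y ∈ d.word → G.indep c.nt d.nt) ∧
      ∀ c ∈ Γ, y ∈ c.word → ∃ j rest, PCDerives G γ (List.replicate j y ++ (c.word ++ rest)) := by
  induction i generalizing γ with
  | zero =>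
    obtain ⟨Γ, hΓ, hw⟩ := h.exists_yields
    have hy : ∀ c ∈ Γ, y ∉ c.word := fun c hc hyc =>
      hv (hw.mem_iff.1 (List.mem_flatMap.2 ⟨c, hc, hyc⟩))
    exact ⟨Γ, hΓ, hw, List.pairwise_of_forall_mem_list fun c _ d hd _ hyd => absurd hyd (hy d hd),
      fun c hc hyc => absurd hyc (hy c hc)⟩
  | succ i ih =>
    rw [List.replicate_succ, List.cons_append] at h ⊢
    obtain ⟨η, X, ζ, rhs, rfl, hη, hP, h⟩ := h.exists_first_step
    obtain ⟨Γ, hΓ, hw, hpair, hrest⟩ := ih h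
    obtain ⟨Γ₁, Γ', rfl, rfl, hΓ'⟩ := List.map_eq_append_iff.1 hΓ
    obtain ⟨Γ₂, Γ₃, rfl, rfl, rfl⟩ := List.map_eq_append_iff.1 hΓ'
    let c := Yield.ofProd Γ₁ hP
    have hy : y ∈ c.word := List.mem_cons_self
    refine ⟨Γ₂ ++ c :: Γ₃, by simp [c, Yield.ofProd], ?_, ?_, fun d hd hyd => ?_⟩
    · rw [List.flatMap_append] at hw
      exact (List.perm_middle.flatMap_right _).trans (.cons y hw)
    · obtain ⟨-, hpair, -⟩ := List.pairwise_append.1 hpair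
      obtain ⟨h₂, h₃, h₂₃⟩ := List.pairwise_append.1 hpair
      refine List.pairwise_append.2
        ⟨h₂, List.pairwise_cons.2 ⟨fun _ _ hyc => absurd hy hyc, h₃⟩, fun d hd => ?_⟩
      exact List.forall_mem_cons.2 ⟨fun _ _ => hη _ (List.mem_map_of_mem hd), h₂₃ d hd⟩
    · rcases List.mem_cons.1 (List.perm_middle.mem_iff.1 hd) with rfl | hd
      · refine ⟨0, (Γ₂ ++ Γ₃).flatMap Yield.word, (append_cons_iff (ρ := []) hη).2 ?_⟩
        rw [← List.map_append]
        exact c.derives.append (Yield.derives_map (Γ₂ ++ Γ₃))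
      · obtain ⟨j, rest, hd⟩ := hrest d (List.mem_append_right _ hd) hyd
        exact ⟨j + 1, rest, (append_cons_iff (ρ := []) hη).2 (.prod hP hd)⟩

end PCDerives

end PCGrammars

/-- The alphabet of the separating language. -/
inductive Letter
  | a | b | x | y
  deriving DecidableEq

instance : Fintype Letter :=
  ⟨{.a, .b, .x, .y}, fun l => by cases l <;> simp⟩

section

open Letter

/-- The language generated by the shuffle grammar `X → a (X ∥ Y) B | x`, `Y → y`, `B → b`. -/
inductive NestedShuffle : List Letter → Prop
  | base : NestedShuffle [x]
  | wrap {w u : List Letter} :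
      NestedShuffle w → IsInterleaving w [y] u → NestedShuffle (a :: (u ++ [b]))

theorem length_eq_sum_count (w : List Letter) :
    w.length = w.count a + w.count b + w.count x + w.count y := by
  induction w with
  | nil => rfl
  | cons l w ih => cases l <;> simp [ih] <;> ring

/-- The relation between `v` and `v'` when one can replace the other inside a word of
`NestedShuffle`: they have the same number of `x`s, of `y`s in excess of the `a`s, and of `b`s in
excess of the `a`s, with the subtrahends moved to the other side. -/
def SameExcess (v v' : List Letter) : Prop :=
  v.count x = v'.count x ∧ v.count y + v'.count a = v'.count y + v.count a ∧
    v.count b + v'.count a = v'.count b + v.count a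

/-- The number of `y`s in `w` that are not yet matched by a `b`. -/
def balance (w : List Letter) : ℤ := w.count y - w.count b

theorem balance_append (w v : List Letter) : balance (w ++ v) = balance w + balance v := by
  simp only [balance, List.count_append, Nat.cast_add]
  ring

namespace SameExcess

variable {v v' : List Letter}

theorem balance_eq (h : SameExcess v v') : balance v = balance v' := by
  obtain ⟨-, hy, hb⟩ := h
  unfold balance
  omega

theorem mem_x_iff (h : SameExcess v v') : x ∈ v ↔ x ∈ v' := by
  rw [← List.count_pos_iff, ← List.count_pos_iff, h.1]

theorem length_le (h : SameExcess v v') (hv : a ∉ v ∨ b ∉ v) : v.length ≤ v'.length := by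
  obtain ⟨hx, hy, hb⟩ := h
  rw [length_eq_sum_count, length_eq_sum_count]
  rcases hv with hv | hv <;> have := List.count_eq_zero.2 hv <;> omega

end SameExcess

namespace NestedShuffle

theorem count_eq {w : List Letter} (h : NestedShuffle w) :
    w.count x = 1 ∧ w.count y = w.count a ∧ w.count b = w.count a := by
  induction h with
  | base => simp
  | wrap _ hu ih => simpa [hu.perm.count_eq] using ih

theorem prefix_spec {p q : List Letter} (h : NestedShuffle (p ++ q)) :
    p.count b ≤ p.count y ∧ p.count y ≤ p.count a ∧ (x ∉ p → b ∉ p) ∧ (x ∈ p → a ∉ q) := by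
  generalize hr : p ++ q = r at h
  induction h generalizing p q with
  | base => rcases List.append_eq_singleton_iff.1 hr with ⟨rfl, rfl⟩ | ⟨rfl, rfl⟩ <;> simp
  | @wrap w u hw hu ih =>
    rcases p with _ | ⟨l, p⟩
    · simp
    obtain ⟨rfl, hpq⟩ := List.cons_eq_cons.1 hr
    rcases q.eq_nil_or_concat' with rfl | ⟨q, l, rfl⟩
    · have hcount := (wrap hw hu).count_eq
      rw [← hr, List.append_nil] at hcount
      have hx : x ∈ a :: p := List.count_pos_iff.1 (by omega)
      exact ⟨by omega, by omega, fun h => absurd hx h, fun _ => List.not_mem_nil⟩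
    · obtain ⟨rfl, ⟨⟩⟩ := List.append_inj' ((List.append_assoc p q [l]).trans hpq) rfl
      obtain ⟨w₁, w₂, v₁, v₂, rfl, hv, hp, hq⟩ := hu.exists_split
      obtain ⟨hb, hy, hxb, hxa⟩ := ih rfl
      rcases List.append_eq_singleton_iff.1 hv.symm with ⟨rfl, rfl⟩ | ⟨rfl, rfl⟩
      · simpa [hp.perm.count_eq, hp.perm.mem_iff, hq.perm.mem_iff]
          using ⟨hb, Nat.le_succ_of_le hy, hxb, hxa⟩
      · simpa [hp.perm.count_eq, hp.perm.mem_iff, hq.perm.mem_iff]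
          using ⟨Nat.le_succ_of_le hb, hy, hxb, hxa⟩

variable {p v q : List Letter}

theorem around_x (h : NestedShuffle (p ++ v ++ q)) (hv : x ∈ v) :
    (x ∉ p ∧ b ∉ p) ∧ x ∉ q ∧ a ∉ q := by
  have hx := h.count_eq.1
  rw [List.count_append, List.count_append] at hx
  have hv' := List.count_pos_iff.2 hv
  have hp : x ∉ p := List.count_eq_zero.1 (by omega)
  have hq : x ∉ q := List.count_eq_zero.1 (by omega)
  refine ⟨⟨hp, ?_⟩, hq, h.prefix_spec.2.2.2 (List.mem_append_right p hv)⟩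
  rw [List.append_assoc] at h
  exact h.prefix_spec.2.2.1 hp

theorem x_mem (h : NestedShuffle (p ++ v ++ q)) (ha : a ∈ v) (hb : b ∈ v) : x ∈ v := by
  by_contra hv
  by_cases hp : x ∈ p
  · rw [List.append_assoc] at h
    exact h.prefix_spec.2.2.2 hp (List.mem_append_left q ha)
  · exact h.prefix_spec.2.2.1 (by simp [hp, hv]) (List.mem_append_right p hb)

theorem sameExcess {v' : List Letter} (h : NestedShuffle (p ++ v ++ q))
    (h' : NestedShuffle (p ++ v' ++ q)) : SameExcess v v' := by
  have hcount := h.count_eq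
  have hcount' := h'.count_eq
  simp only [List.count_append] at hcount hcount'
  unfold SameExcess
  omega

theorem replicate_append (n : ℕ) :
    NestedShuffle (List.replicate n a ++ List.replicate n y ++ x :: List.replicate n b) := by
  induction n with
  | zero => exact .base
  | succ n ih =>
    rw [List.append_assoc] at ih
    simpa [List.replicate_succ, ← List.replicate_succ'] using wrap ih (.append_cons _ _ y)

end NestedShuffle

/-- The nonterminals of the shuffle grammar generating `NestedShuffle`. -/
inductive Nonterminal
  | X | Y | B
  deriving DecidableEq

instance : Fintype Nonterminal :=
  ⟨{.X, .Y, .B}, fun A => by cases A <;> simp⟩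

open Nonterminal PATerm in
/-- The shuffle grammar `X → a (X ∥ Y) B | x`, `Y → y`, `B → b`. -/
def nestedShuffleGrammar : PAGrammar Letter where
  V := Nonterminal
  finV := inferInstance
  start := X
  prods := {(X, a, ((var X).par (var Y)).seq (var B)), (X, x, eps), (Y, y, eps), (B, b, eps)}
  finP := Set.toFinite _

theorem isShuffleCFL_nestedShuffle : IsShuffleCFL {w | NestedShuffle w} := by
  refine ⟨nestedShuffleGrammar, Set.ext fun w => ⟨fun h => ?_, fun h => ?_⟩⟩
  · let ρ : Nonterminal → Set (List Letter)
      | .X => {w | NestedShuffle w}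
      | .Y => {[y]}
      | .B => {[b]}
    refine PAGen.mem_lang (ρ := ρ) ?_ h
    rintro _ _ _ (⟨⟨⟩⟩ | ⟨⟨⟩⟩ | ⟨⟨⟩⟩ | ⟨⟨⟩⟩) w hw
    · obtain ⟨u, ⟨w, hw, _, rfl, hu⟩, _, rfl, rfl⟩ := hw
      exact .wrap hw hu
    · obtain rfl := hw
      exact .base
    all_goals exact congrArg (List.cons _) hw
  · have hY : PAGen nestedShuffleGrammar.prods (.var .Y) [y] :=
      .prod (Or.inr (Or.inr (Or.inl rfl))) .done
    have hB : PAGen nestedShuffleGrammar.prods (.var .B) [b] :=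
      .prod (Or.inr (Or.inr (Or.inr rfl))) .done
    change PAGen _ (.var Nonterminal.X) w
    induction h with
    | base => exact .prod (Or.inr (Or.inl rfl)) .done
    | wrap _ hu ih => exact .prod (Or.inl rfl) ((ih.par hY hu).seq hB)

/-- The layer of a letter in the word `aⁿ yⁿ x bⁿ`. -/
def Letter.rank : Letter → ℕ
  | a => 0
  | x => 1
  | y => 1
  | b => 2

theorem notMem_or_notMem_of_pairwise_rank_le {p v q : List Letter}
    (h : (p ++ v ++ q).Pairwise (rank · ≤ rank ·)) (hlen : v.length ≤ (p ++ v ++ q).count y) :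
    a ∉ v ∨ b ∉ v := by
  by_contra! ⟨ha, hb⟩
  obtain ⟨hpv, -, hq⟩ := List.pairwise_append.1 h
  have hp : p.count y = 0 := List.count_eq_zero.2 fun hy =>
    absurd ((List.pairwise_append.1 hpv).2.2 y hy a ha) (by simp [rank])
  have hq : q.count y = 0 := List.count_eq_zero.2 fun hy =>
    absurd (hq b (List.mem_append_right p hb) y hy) (by simp [rank])
  have ha' := List.count_pos_iff.2 ha
  rw [length_eq_sum_count, List.count_append, List.count_append] at hlen
  omega

section Traces

variable {J : Letter → Letter → Prop}

theorem NestedShuffle.map_rank_eq_of_adjSwap (hsymm : ∀ l m, J l m → J m l)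
    (hJ : ∀ v w, NestedShuffle v → AdjSwap J v w → NestedShuffle w) {v w : List Letter}
    (hv : NestedShuffle v) (h : AdjSwap J v w) : w.map rank = v.map rank := by
  have hayxb : NestedShuffle [a, y, x, b] := NestedShuffle.replicate_append 1
  have haxyb : NestedShuffle [a, x, y, b] := .wrap .base (.append_cons [x] [] y)
  have hay : ¬ J a y := fun h => by
    simpa using (hJ _ _ hayxb (.swap [] [x, b] h)).prefix_spec (p := [y]) |>.2.1
  have hax : ¬ J a x := fun h => by
    simpa using (hJ _ _ haxyb (.swap [] [y, b] h)).prefix_spec (p := [x]) |>.2.2.2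
  have hxb : ¬ J x b := fun h => by
    simpa using (hJ _ _ hayxb (.swap [a, y] [] h)).prefix_spec (p := [a, y, b]) |>.2.2.1
  have hyb : ¬ J y b := fun h => by
    simpa using (hJ _ _ haxyb (.swap [a, x] [] h)).prefix_spec (p := [a, x, b]) |>.1
  obtain @⟨p, q, l, m, h⟩ := h
  have hab : a ∈ [l, m] → b ∈ [l, m] → x ∈ [l, m] := x_mem (p := p) (q := q) (by simpa using hv)
  have hlm : rank l = rank m := by
    have := hsymm l m h
    cases l <;> cases m <;> simp_all [rank]
  simp [hlm]

theorem NestedShuffle.map_rank_eq_of_traceEquiv (hsymm : ∀ l m, J l m → J m l)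
    (hJ : ∀ v w, NestedShuffle v → AdjSwap J v w → NestedShuffle w) {v w : List Letter}
    (hv : NestedShuffle v) (h : TraceEquiv J v w) : w.map rank = v.map rank := by
  suffices NestedShuffle w ∧ w.map rank = v.map rank from this.2
  induction h with
  | refl => exact ⟨hv, rfl⟩
  | tail _ hswap ih =>
    exact ⟨hJ _ _ ih.1 hswap, (ih.1.map_rank_eq_of_adjSwap hsymm hJ hswap).trans ih.2⟩

end Traces

theorem not_isTraceCFL_nestedShuffle : ¬ IsTraceCFL {w | NestedShuffle w} := by
  rintro ⟨J, hsymm, -, L₀, hL₀, hL⟩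
  have hmem (w) : NestedShuffle w ↔ ∃ v ∈ L₀, TraceEquiv J v w := (Set.ext_iff.1 hL w).symm
  have hsub (v) (hv : v ∈ L₀) : NestedShuffle v := (hmem v).2 ⟨v, hv, .refl⟩
  have hJ (v w) (hv : NestedShuffle v) (h : AdjSwap J v w) : NestedShuffle w := by
    obtain ⟨u, hu, huv⟩ := (hmem v).1 hv
    exact (hmem w).2 ⟨u, hu, huv.tail h⟩
  obtain ⟨n, hn⟩ := exists_shorter_infix_of_isContextFree hL₀
  obtain ⟨v, hv, htrace⟩ := (hmem _).1 (NestedShuffle.replicate_append n)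
  have hrank := (hsub v hv).map_rank_eq_of_traceEquiv hsymm hJ htrace
  have hlen := congrArg List.length hrank
  simp only [List.map_append, List.map_cons, List.length_append, List.length_map,
    List.length_replicate, List.length_cons] at hlen
  have hsorted : v.Pairwise (rank · ≤ rank ·) := by
    rw [← List.pairwise_map (R := (· ≤ ·)), ← hrank, List.pairwise_map]
    simp [List.pairwise_append, rank]
  obtain ⟨p, u, u', q, rfl, hu', hlt, hle⟩ := hn v hv (by omega)
  have hcount : u.length ≤ (p ++ u ++ q).count y := by
    have := (hsub _ hv).count_eq
    have := length_eq_sum_count (p ++ u ++ q)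
    omega
  exact hlt.not_ge (((hsub _ hv).sameExcess (hsub _ hu')).length_le
    (notMem_or_notMem_of_pairwise_rank_le hsorted hcount))

namespace PCGrammar

variable {G : PCGrammar Letter} {p : List Letter} {γ η τ : List G.V} {χ : G.V}

/-- Every entry of `γ` generates some word, and all words that `γ` generates are continuations of
`p` to words of `NestedShuffle`. This holds for a configuration reached by generating `p`, as long
as the derivation can be completed. -/
structure IsLive (G : PCGrammar Letter) (p : List Letter) (γ : List G.V) : Prop where
  productive : ∀ Z ∈ γ, ∃ v, PCDerives G [Z] v
  sound : ∀ v, PCDerives G γ v → NestedShuffle (p ++ v)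

/-- The balance of `γ`; in a live configuration it does not depend on the choice made by
`someWord`. -/
noncomputable def weight (G : PCGrammar Letter) (γ : List G.V) : ℤ :=
  balance (γ.flatMap G.someWord)

theorem weight_nil : G.weight [] = 0 := rfl

theorem weight_append (γ δ : List G.V) : G.weight (γ ++ δ) = G.weight γ + G.weight δ := by
  rw [weight, List.flatMap_append, balance_append, weight, weight]

namespace IsLive

theorem sameExcess {δ : List G.V} {v v' : List Letter} (h : G.IsLive p (η ++ (δ ++ τ)))
    (hv : PCDerives G δ v) (hv' : PCDerives G δ v') : SameExcess v v' := by
  have hη := PCDerives.flatMap_someWord (γ := η) fun Z hZ => h.productive Z (by simp [hZ])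
  have hτ := PCDerives.flatMap_someWord (γ := τ) fun Z hZ => h.productive Z (by simp [hZ])
  have hword (u) (hu : PCDerives G δ u) := h.sound _ (hη.append (hu.append hτ))
  simp only [← List.append_assoc] at hword
  exact (hword v hv).sameExcess (hword v' hv')

theorem around_x {u v : List Letter} (h : G.IsLive p (η ++ χ :: τ)) (hχ : x ∈ G.someWord χ)
    (hu : PCDerives G η u) (hv : PCDerives G τ v) : b ∉ u ∧ x ∉ v ∧ a ∉ v := by
  have hword := h.sound _ (hu.append ((PCDerives.someWord (h.productive χ (by simp))).append hv))
  simp only [← List.append_assoc] at hword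
  obtain ⟨⟨-, hb⟩, hq⟩ := hword.around_x hχ
  exact ⟨fun hbu => hb (List.mem_append_right p hbu), hq⟩

theorem exists_step {l : Letter} {w : List Letter} (h : G.IsLive p γ)
    (hw : PCDerives G γ (l :: w)) :
    ∃ η X ζ rhs, γ = η ++ X :: ζ ∧ (X, l, rhs) ∈ G.prods ∧
      G.IsLive (p ++ [l]) (rhs ++ (η ++ ζ)) ∧ PCDerives G (rhs ++ (η ++ ζ)) w := by
  obtain ⟨η, X, ζ, rhs, rfl, hη, hP, hw⟩ := hw.exists_first_step
  refine ⟨η, X, ζ, rhs, rfl, hP, ⟨hw.productive, fun v hv => ?_⟩, hw⟩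
  rw [List.append_assoc]
  exact h.sound _ ((PCDerives.append_cons_iff (ρ := []) hη).2 (.prod hP hv))

theorem sameExcess_someWord_of_prod {l : Letter} {rhs : List G.V} (h : G.IsLive p (η ++ χ :: τ))
    (hP : (χ, l, rhs) ∈ G.prods) (hrhs : ∀ Z ∈ rhs, ∃ v, PCDerives G [Z] v) :
    SameExcess (l :: rhs.flatMap G.someWord) (G.someWord χ) := by
  refine h.sameExcess (δ := [χ]) (.prod hP ?_) (PCDerives.someWord (h.productive χ (by simp)))
  simpa using PCDerives.flatMap_someWord hrhs

theorem weight_eq_of_prod {rhs : List G.V} (h : G.IsLive p (η ++ χ :: τ))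
    (hP : (χ, a, rhs) ∈ G.prods) (hrhs : ∀ Z ∈ rhs, ∃ v, PCDerives G [Z] v) :
    G.weight rhs = G.weight [χ] := by
  simpa [balance, weight] using (h.sameExcess_someWord_of_prod hP hrhs).balance_eq

theorem b_notMem_someWord (h : G.IsLive p (η ++ χ :: τ)) (hχ : x ∈ G.someWord χ) {P : List G.V}
    (hP : P ⊆ η) : b ∉ P.flatMap G.someWord := by
  have hb := (h.around_x hχ (PCDerives.flatMap_someWord fun Z hZ => h.productive Z (by simp [hZ]))
    (PCDerives.flatMap_someWord fun Z hZ => h.productive Z (by simp [hZ]))).1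
  intro hmem
  obtain ⟨Z, hZ, hbZ⟩ := List.mem_flatMap.1 hmem
  exact hb (List.mem_flatMap.2 ⟨Z, hP hZ, hbZ⟩)

end IsLive

/-- The weight of every prefix of `γ` that includes the nonterminal `χ` responsible for the `x` is
at most `κ`. -/
def IsPrefixBounded (G : PCGrammar Letter) (κ : ℤ) (γ : List G.V) : Prop :=
  ∃ η χ τ, γ = η ++ χ :: τ ∧ x ∈ G.someWord χ ∧ ∀ P, P <+: τ → G.weight (η ++ χ :: P) ≤ κ

theorem weight_nonneg {γ : List G.V} (h : b ∉ γ.flatMap G.someWord) : 0 ≤ G.weight γ := by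
  simp [weight, balance, List.count_eq_zero.2 h]

namespace IsPrefixBounded

variable {κ : ℤ}

theorem step_of_x_mem {rhs : List G.V} (hκ : ∀ P, P <+: rhs → G.weight P ≤ κ)
    (h : G.IsLive p (η ++ χ :: τ)) (hχ : x ∈ G.someWord χ)
    (hτ : ∀ P, P <+: τ → G.weight (η ++ χ :: P) ≤ κ) (hP : (χ, a, rhs) ∈ G.prods)
    (hrhs : ∀ Z ∈ rhs, ∃ v, PCDerives G [Z] v) :
    G.IsPrefixBounded κ (rhs ++ (η ++ τ)) := by
  have hx : x ∈ a :: rhs.flatMap G.someWord :=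
    (h.sameExcess_someWord_of_prod hP hrhs).mem_x_iff.2 hχ
  have hweight := h.weight_eq_of_prod hP hrhs
  obtain ⟨χ', hχ', hx'⟩ := List.mem_flatMap.1 (List.mem_of_ne_of_mem (by simp) hx)
  obtain ⟨η₁, ζ₁, rfl⟩ := List.append_of_mem hχ'
  refine ⟨η₁, χ', ζ₁ ++ (η ++ τ), by simp, hx', fun P hpre => ?_⟩
  rcases prefix_append_cases hpre with hpre | ⟨P, rfl, hpre⟩
  · exact hκ _ (by simpa using hpre)
  have hP' : G.weight (η₁ ++ χ' :: (ζ₁ ++ P)) = G.weight [χ] + G.weight P := by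
    rw [← List.cons_append, ← List.append_assoc, weight_append, hweight]
  rw [hP']
  have hcons (T : List G.V) : G.weight (η ++ χ :: T) = G.weight η + G.weight [χ] + G.weight T := by
    rw [List.append_cons, weight_append, weight_append]
  rw [List.prefix_append_right_inj] at hpre
  rcases prefix_append_cases hpre with ⟨η', rfl⟩ | ⟨P, rfl, hτP⟩
  · have hη' := weight_nonneg (h.b_notMem_someWord hχ (List.subset_append_right P η'))
    have hη := hτ [] List.nil_prefix
    rw [hcons, weight_nil, weight_append] at hη
    linarith
  · have := hτ P hτP
    rw [hcons] at this
    rw [weight_append]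
    linarith

theorem exists_step {w : List Letter}
    (hκ : ∀ X l rhs, (X, l, rhs) ∈ G.prods → ∀ P, P <+: rhs → G.weight P ≤ κ)
    (h : G.IsLive p γ) (hγ : G.IsPrefixBounded κ γ) (hw : PCDerives G γ (a :: w)) :
    ∃ δ, G.IsLive (p ++ [a]) δ ∧ G.IsPrefixBounded κ δ ∧ PCDerives G δ w := by
  obtain ⟨μ, X, ζ, rhs, heq, hP, hlive, hw⟩ := h.exists_step hw
  refine ⟨_, hlive, ?_, hw⟩
  have hrhs : ∀ Z ∈ rhs, ∃ v, PCDerives G [Z] v := fun Z hZ => hlive.productive Z (by simp [hZ])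
  obtain ⟨η, χ, τ, rfl, hχ, hτ⟩ := hγ
  rcases append_cons_eq_append_cons heq with ⟨rfl, rfl, rfl⟩ | ⟨η₂, rfl, rfl⟩ | ⟨η₂, rfl, rfl⟩
  · exact step_of_x_mem (hκ _ _ _ hP) h hχ hτ hP hrhs
  · have hη := PCDerives.flatMap_someWord (γ := η) fun Z hZ => h.productive Z (by simp [hZ])
    have hη₂ := PCDerives.flatMap_someWord (γ := η₂) fun Z hZ => h.productive Z (by simp [hZ])
    have hζ := PCDerives.flatMap_someWord (γ := ζ) fun Z hZ => h.productive Z (by simp [hZ])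
    have hτ' := hη₂.append (.prod hP ((PCDerives.flatMap_someWord hrhs).append hζ))
    exact absurd (by simp) (h.around_x hχ hη hτ').2.2
  · refine ⟨rhs ++ (μ ++ η₂), χ, τ, by simp, hχ, fun P hpre => ?_⟩
    rw [List.append_assoc] at h
    have hweight := h.weight_eq_of_prod hP hrhs
    have hτ := hτ P hpre
    rw [List.append_assoc, List.cons_append, List.append_cons, weight_append, weight_append] at hτ
    rwa [List.append_assoc, List.append_assoc, weight_append, weight_append, hweight,
      add_left_comm, ← add_assoc]

theorem exists_of_replicate_append {n : ℕ} {w : List Letter}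
    (hκ : ∀ X l rhs, (X, l, rhs) ∈ G.prods → ∀ P, P <+: rhs → G.weight P ≤ κ)
    (h : G.IsLive p γ) (hγ : G.IsPrefixBounded κ γ) (hw : PCDerives G γ (List.replicate n a ++ w)) :
    ∃ δ, G.IsLive (p ++ List.replicate n a) δ ∧ G.IsPrefixBounded κ δ ∧ PCDerives G δ w := by
  induction n generalizing p γ with
  | zero => exact ⟨γ, by simpa using h, hγ, by simpa using hw⟩
  | succ n ih =>
    rw [List.replicate_succ, List.cons_append] at hw
    obtain ⟨δ, hδ, hδγ, hw⟩ := exists_step hκ h hγ hw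
    obtain ⟨ε, hε, h'⟩ := ih hδ hδγ hw
    exact ⟨ε, by simpa [List.replicate_succ] using hε, h'⟩

end IsPrefixBounded

theorem exists_weight_prefix_le (G : PCGrammar Letter) :
    ∃ κ : ℕ, G.weight [G.start] ≤ κ ∧
      ∀ X l rhs, (X, l, rhs) ∈ G.prods → ∀ P, P <+: rhs → G.weight P ≤ κ := by
  have hfin := G.finP.biUnion fun r _ => List.finite_toSet r.2.2.inits
  obtain ⟨κ, hκ⟩ := ((hfin.image G.weight).insert (G.weight [G.start])).bddAbove
  have hmax (i : ℤ) (hi : i ≤ κ) : i ≤ (κ.toNat : ℤ) := hi.trans κ.self_le_toNat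
  refine ⟨κ.toNat, hmax _ (hκ (Set.mem_insert _ _)), fun X l rhs hP P hpre => hmax _ (hκ ?_)⟩
  exact .inr ⟨P, Set.mem_iUnion₂.2 ⟨_, hP, (List.mem_inits _ _).2 hpre⟩, rfl⟩

theorem exists_length_someWord_le (G : PCGrammar Letter) :
    ∃ E, ∀ Z, (G.someWord Z).length ≤ E := by
  have := G.finV
  obtain ⟨E, hE⟩ := (Set.finite_range fun Z => (G.someWord Z).length).bddAbove
  exact ⟨E, fun Z => hE (Set.mem_range_self Z)⟩

theorem IsLive.length_word_le {E : ℕ} (h : G.IsLive p γ) (hE : ∀ Z, (G.someWord Z).length ≤ E)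
    {c : G.Yield} (hc : c.nt ∈ γ) (ha : a ∉ c.word) : c.word.length ≤ E := by
  obtain ⟨η, τ, rfl⟩ := List.append_of_mem hc
  exact ((h.sameExcess (δ := [c.nt]) c.derives (PCDerives.someWord ⟨_, c.derives⟩)).length_le
    (.inl ha)).trans (hE c.nt)

/-- The entries of `Q` with a `y` can be moved behind the others, after which the latter emit their
`b`s before any `y` of `Q` comes. -/
theorem IsLive.count_b_flatMap_word_le {P Q R : List G.Yield}
    (h : G.IsLive p ((P ++ (Q ++ R)).map Yield.nt))
    (hindep : ∀ c ∈ Q, ∀ d ∈ Q, y ∉ c.word → y ∈ d.word → G.indep c.nt d.nt)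
    (hb : ∀ d ∈ Q, y ∈ d.word → b ∉ d.word) :
    ((Q.flatMap Yield.word).count b : ℤ) ≤ balance p + G.weight (P.map Yield.nt) := by
  classical
  let C := Q.filter fun c => y ∉ c.word
  let D := Q.filter fun c => y ∈ c.word
  have hP := PCDerives.flatMap_someWord (γ := P.map Yield.nt) fun Z hZ =>
    h.productive Z (by rw [List.map_append]; exact List.mem_append_left _ hZ)
  have hderives := (PCDerives.filter_append_filter_iff (ρ := P.map Yield.nt) Yield.nt _ hindep).1 <|
    hP.append ((Yield.derives_map C).append ((Yield.derives_map D).append (Yield.derives_map R)))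
  have hword := h.sound _ (by simpa using hderives)
  simp only [← List.append_assoc] at hword
  rw [List.append_assoc] at hword
  have hcount : (Q.flatMap Yield.word).count b = (C.flatMap Yield.word).count b := by
    have hD : (D.flatMap Yield.word).count b = 0 := by
      simpa [D, List.count_eq_zero] using hb
    rw [← ((List.filter_append_perm (fun c : G.Yield => y ∈ c.word) Q).flatMap_right _).count_eq]
    simpa [C, D] using hD
  have hyC : (C.flatMap Yield.word).count y = 0 := by
    simp [C, List.count_eq_zero]
  have := hword.prefix_spec.1
  simp only [List.count_append] at this
  unfold weight balance
  omega

theorem IsPrefixBounded.false_of_replicate_append {κ E n : ℕ} [Fintype G.V]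
    (hE : ∀ Z, (G.someWord Z).length ≤ E) (hn : (Fintype.card G.V + 1) * (κ + 1 + E) + E ≤ n)
    (h : G.IsLive (List.replicate n a) γ) (hγ : G.IsPrefixBounded κ γ)
    (hw : PCDerives G γ (List.replicate n y ++ x :: List.replicate n b)) : False := by
  classical
  obtain ⟨η, χ, τ, rfl, hχ, hτ⟩ := hγ
  obtain ⟨Γ, hΓ, hperm, hpair, hrest⟩ := hw.exists_yields_of_replicate_append (by simp)
  obtain ⟨Γη, Γ', rfl, rfl, hΓ'⟩ := List.map_eq_append_iff.1 hΓ
  obtain ⟨c, Γτ, rfl, rfl, rfl⟩ := List.map_eq_cons_iff.1 hΓ'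
  obtain ⟨hbη, hxτ, -⟩ := h.around_x hχ (Yield.derives_map Γη) (Yield.derives_map Γτ)
  have hlen : ∀ d ∈ Γη ++ c :: Γτ, d.word.count b ≤ E := fun d hd => by
    refine List.count_le_length.trans (h.length_word_le hE (hΓ ▸ List.mem_map_of_mem hd) ?_)
    exact fun ha => by simpa using hperm.mem_iff.1 (List.mem_flatMap.2 ⟨d, hd, ha⟩)
  have hby : ∀ d ∈ Γτ, y ∈ d.word → b ∉ d.word := fun d hd hyd => by
    obtain ⟨j, rest, hfirst⟩ := hrest d (by simp [hd]) hyd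
    have hword := h.sound _ hfirst
    simp only [← List.append_assoc] at hword
    have hxd : x ∉ d.word := fun hxd => hxτ (List.mem_flatMap.2 ⟨d, hd, hxd⟩)
    simpa using hword.prefix_spec.2.2.1 (by simpa using hxd)
  have hsum : (Fintype.card G.V + 1) * (κ + 1 + E) ≤ (Γτ.map fun d => d.word.count b).sum := by
    have hcount : c.word.count b + (Γτ.map fun d => d.word.count b).sum = n := by
      simpa [List.flatMap_append, List.count_eq_zero.2 hbη, List.count_flatMap,
        Function.comp_def, List.count_replicate] using hperm.count_eq b
    have hc := hlen c (by simp)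
    omega
  obtain ⟨P, Q, R, rfl, htwin, hκ⟩ := exists_heavy_infix_of_le_sum Yield.nt (fun c => y ∉ c.word)
    (fun c => c.word.count b) Finset.univ Γτ (fun d hd => hlen d (by simp [hd]))
    (by simpa using hsum)
  have hQ := IsLive.count_b_flatMap_word_le (P := Γη ++ c :: P) (Q := Q) (R := R) (by simpa using h)
    (fun d hd e he hyd hye => ?_) fun d hd => hby d (by simp [hd])
  · have hτP := hτ (P.map Yield.nt) (by simp)
    have ha : balance (List.replicate n a) = 0 := by simp [balance, List.count_replicate]
    rw [List.map_append, List.map_cons, ha, List.count_flatMap] at hQ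
    simp only [Function.comp_def] at hQ
    omega
  · obtain ⟨f, hf, hyf, hfd⟩ := htwin d hd hyd (Finset.mem_univ _)
    obtain ⟨-, hpair, -⟩ := List.pairwise_append.1 hpair
    obtain ⟨-, -, hPQ⟩ := List.pairwise_append.1 (List.pairwise_cons.1 hpair).2
    exact hfd ▸ hPQ f hf e (by simp [he]) hyf hye

end PCGrammar

open PCGrammar in
theorem not_isPCCFL_nestedShuffle : ¬ IsPCCFL {w | NestedShuffle w} := by
  rintro ⟨G, hG⟩
  have := G.finV
  have := Fintype.ofFinite G.V
  obtain ⟨κ, hstart, hκ⟩ := G.exists_weight_prefix_le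
  obtain ⟨E, hE⟩ := G.exists_length_someWord_le
  have hiff (w : List Letter) : PCDerives G [G.start] w ↔ NestedShuffle w := Set.ext_iff.1 hG w
  let n := (Fintype.card G.V + 1) * (κ + 1 + E) + E
  have hw := (hiff _).2 (.replicate_append n)
  have hlive : G.IsLive [] [G.start] := ⟨hw.productive, fun v => (hiff v).1⟩
  have hx : x ∈ G.someWord G.start := by
    have hcount := ((hiff _).1 (PCDerives.someWord ⟨_, hw⟩)).count_eq.1
    exact List.count_pos_iff.1 (by omega)
  have hbounded : G.IsPrefixBounded κ [G.start] :=
    ⟨[], G.start, [], rfl, hx, fun P hP => by simpa [List.prefix_nil.1 hP] using hstart⟩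
  rw [List.append_assoc] at hw
  obtain ⟨δ, hδ, hδκ, hw⟩ := IsPrefixBounded.exists_of_replicate_append hκ hlive hbounded hw
  exact hδκ.false_of_replicate_append hE le_rfl hδ hw

end

/-- some language is in shuffleCFL but neither in PCCFL nor in traceCFL. -/
theorem exists_shufflecfl_not_pccfl_not_tracecfl :
    ∃ (α : Type) (_ : Finite α) (L : Set (List α)),
      IsShuffleCFL L ∧ ¬ IsPCCFL L ∧ ¬ IsTraceCFL L :=
  ⟨Letter, inferInstance, {w | NestedShuffle w}, isShuffleCFL_nestedShuffle,
    not_isPCCFL_nestedShuffle, not_isTraceCFL_nestedShuffle⟩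
end

section
/- Both PCCFL and trPCCFL are closed under shuffle: if languages L and K (over the same finite alphabet) belong to PCCFL then L || K belongs to PCCFL, and if L and K belong to trPCCFL then L || K belongs to trPCCFL. -/
/-!
Up to swaps, a configuration over the disjoint union of the nonterminals of `G` and `H`, with all
cross pairs independent, is just a configuration of `G` next to a configuration of `H`. Each step
is a step of exactly one of the two, so the words derived are the interleavings of words derived
from the two parts. This runs from the two-letter configuration `[G.start, H.start]`, which a fresh
start symbol can replace: as this configuration is nonempty, every derivation from it has a first
step, and only finitely many first steps are possible. Dependence stays transitive because it
acquires no new pairs except that of the fresh symbol with itself.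
-/

section TraceEquiv

variable {A B : Type} {J : A → A → Prop}

theorem AdjSwap.append_left {x y : List A} (h : AdjSwap J x y) (z : List A) :
    AdjSwap J (z ++ x) (z ++ y) := by
  obtain ⟨x, y, hab⟩ := h
  simpa only [List.append_assoc] using AdjSwap.swap (z ++ x) y hab

theorem AdjSwap.append_right {x y : List A} (h : AdjSwap J x y) (z : List A) :
    AdjSwap J (x ++ z) (y ++ z) := by
  obtain ⟨x, y, hab⟩ := h
  simpa only [List.append_assoc, List.cons_append] using AdjSwap.swap x (y ++ z) hab

instance AdjSwap.instSymm [Std.Symm J] : Std.Symm (AdjSwap J) where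
  symm := by
    rintro _ _ ⟨x, y, hab⟩
    exact .swap x y (symm hab)

theorem AdjSwap.perm {x y : List A} (h : AdjSwap J x y) : x.Perm y := by
  obtain ⟨x, y, -⟩ := h
  exact .append_left x (.swap _ _ y)

theorem AdjSwap.map {f : B → A} {x y : List B} (h : AdjSwap (InvImage J f) x y) :
    AdjSwap J (x.map f) (y.map f) := by
  obtain ⟨x, y, hab⟩ := h
  simpa only [List.map_append, List.map_cons] using AdjSwap.swap (x.map f) (y.map f) hab

theorem AdjSwap.exists_of_map_left {f : B → A} {x : List B} {y : List A}
    (h : AdjSwap J (x.map f) y) : ∃ z, AdjSwap (InvImage J f) x z ∧ z.map f = y := by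
  generalize hx : x.map f = x' at h
  obtain ⟨p, q, hab⟩ := h
  obtain ⟨p, r, rfl, rfl, hr⟩ := List.map_eq_append_iff.1 hx
  obtain ⟨a, s, rfl, rfl, hs⟩ := List.map_eq_cons_iff.1 hr
  obtain ⟨b, q, rfl, rfl, rfl⟩ := List.map_eq_cons_iff.1 hs
  exact ⟨p ++ b :: a :: q, .swap p q hab, by simp only [List.map_append, List.map_cons]⟩

theorem TraceEquiv.symm [Std.Symm J] {x y : List A} (h : TraceEquiv J x y) : TraceEquiv J y x :=
  Relation.ReflTransGen.stdSymm.symm _ _ h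

theorem TraceEquiv.append {x x' y y' : List A} (hx : TraceEquiv J x x') (hy : TraceEquiv J y y') :
    TraceEquiv J (x ++ y) (x' ++ y') :=
  (hx.lift (· ++ y) fun _ _ h => h.append_right y).trans
    (hy.lift (x' ++ ·) fun _ _ h => h.append_left x')

theorem TraceEquiv.cons (a : A) {x y : List A} (h : TraceEquiv J x y) :
    TraceEquiv J (a :: x) (a :: y) :=
  TraceEquiv.append (x := [a]) .refl h

theorem TraceEquiv.perm {x y : List A} (h : TraceEquiv J x y) : x.Perm y := by
  induction h with
  | refl => exact .refl _
  | tail _ hs ih => exact ih.trans hs.perm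

theorem TraceEquiv.finite_setOf (x : List A) : {y | TraceEquiv J x y}.Finite :=
  x.permutations.finite_toSet.subset fun _ h => List.mem_permutations.2 h.perm.symm

theorem TraceEquiv.map {f : B → A} {x y : List B} (h : TraceEquiv (InvImage J f) x y) :
    TraceEquiv J (x.map f) (y.map f) :=
  h.lift (List.map f) fun _ _ => AdjSwap.map

theorem TraceEquiv.exists_of_map_left {f : B → A} {x : List B} {y : List A}
    (h : TraceEquiv J (x.map f) y) : ∃ z, TraceEquiv (InvImage J f) x z ∧ z.map f = y := by
  induction h with
  | refl => exact ⟨x, .refl, rfl⟩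
  | tail _ hs ih =>
    obtain ⟨z, hz, rfl⟩ := ih
    obtain ⟨z', hz', rfl⟩ := hs.exists_of_map_left
    exact ⟨z', hz.tail hz', rfl⟩

theorem TraceEquiv.cons_append {a : A} {x : List A} (h : ∀ b ∈ x, J a b) (y : List A) :
    TraceEquiv J (a :: (x ++ y)) (x ++ a :: y) := by
  induction x with
  | nil => exact .refl
  | cons b x ih =>
    obtain ⟨hab, hx⟩ := List.forall_mem_cons.1 h
    exact .head (.swap [] (x ++ y) hab) (TraceEquiv.cons b (ih hx))

end TraceEquiv

section SumIndep

variable {A B : Type} {I : A → A → Prop} {J : B → B → Prop}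

/-- The independence relation on a disjoint union that extends `I` and `J` and makes letters from
different sides independent. -/
def SumIndep (I : A → A → Prop) (J : B → B → Prop) : A ⊕ B → A ⊕ B → Prop
  | .inl x, .inl y => I x y
  | .inr x, .inr y => J x y
  | _, _ => True

instance SumIndep.instSymm [Std.Symm I] [Std.Symm J] : Std.Symm (SumIndep I J) where
  symm := by
    rintro (x | x) (y | y) h
    exacts [symm_of I h, trivial, trivial, symm_of J h]

theorem filterMap_getLeft?_map_inl (l : List A) :
    (l.map (Sum.inl : A → A ⊕ B)).filterMap Sum.getLeft? = l := by
  rw [List.filterMap_map]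
  exact List.filterMap_some

theorem filterMap_getLeft?_map_inr (l : List B) :
    (l.map (Sum.inr : B → A ⊕ B)).filterMap Sum.getLeft? = [] := by
  simp

theorem filterMap_getRight?_map_inl (l : List A) :
    (l.map (Sum.inl : A → A ⊕ B)).filterMap Sum.getRight? = [] := by
  simp

theorem filterMap_getRight?_map_inr (l : List B) :
    (l.map (Sum.inr : B → A ⊕ B)).filterMap Sum.getRight? = l := by
  rw [List.filterMap_map]
  exact List.filterMap_some

theorem eq_nil_iff_filterMap_getLeft?_getRight? {c : List (A ⊕ B)} :
    c = [] ↔ c.filterMap Sum.getLeft? = [] ∧ c.filterMap Sum.getRight? = [] := by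
  rcases c with _ | ⟨_ | _, c⟩ <;> simp

theorem TraceEquiv.filterMap_getLeft? {c d : List (A ⊕ B)} (h : TraceEquiv (SumIndep I J) c d) :
    TraceEquiv I (c.filterMap Sum.getLeft?) (d.filterMap Sum.getLeft?) := by
  induction h with
  | refl => exact .refl
  | tail _ hs ih =>
    refine ih.trans ?_
    obtain @⟨p, q, a, b, hab⟩ := hs
    rw [List.filterMap_append, List.filterMap_append]
    rcases a with a | a <;> rcases b with b | b
    exacts [.single (.swap _ _ hab), .refl, .refl, .refl]

theorem TraceEquiv.filterMap_getRight? {c d : List (A ⊕ B)} (h : TraceEquiv (SumIndep I J) c d) :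
    TraceEquiv J (c.filterMap Sum.getRight?) (d.filterMap Sum.getRight?) := by
  induction h with
  | refl => exact .refl
  | tail _ hs ih =>
    refine ih.trans ?_
    obtain @⟨p, q, a, b, hab⟩ := hs
    rw [List.filterMap_append, List.filterMap_append]
    rcases a with a | a <;> rcases b with b | b
    exacts [.refl, .refl, .refl, .single (.swap _ _ hab)]

theorem traceEquiv_sumIndep_left_append_right (c : List (A ⊕ B)) :
    TraceEquiv (SumIndep I J) c
      ((c.filterMap Sum.getLeft?).map .inl ++ (c.filterMap Sum.getRight?).map .inr) := by
  induction c with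
  | nil => exact .refl
  | cons s c ih =>
    rcases s with x | y
    · exact .cons _ ih
    · refine (TraceEquiv.cons _ ih).trans (TraceEquiv.cons_append ?_ _)
      rintro _ hz
      obtain ⟨z, -, rfl⟩ := List.mem_map.1 hz
      trivial

theorem traceEquiv_sumIndep_iff [Std.Symm I] [Std.Symm J] {c d : List (A ⊕ B)} :
    TraceEquiv (SumIndep I J) c d ↔
      TraceEquiv I (c.filterMap Sum.getLeft?) (d.filterMap Sum.getLeft?) ∧
        TraceEquiv J (c.filterMap Sum.getRight?) (d.filterMap Sum.getRight?) := by
  refine ⟨fun h => ⟨h.filterMap_getLeft?, h.filterMap_getRight?⟩, fun ⟨hl, hr⟩ => ?_⟩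
  have parts_equiv := TraceEquiv.append (J := SumIndep I J)
    (TraceEquiv.map (f := Sum.inl) hl) (TraceEquiv.map (f := Sum.inr) hr)
  exact (traceEquiv_sumIndep_left_append_right c).trans <| parts_equiv.trans <|
    (traceEquiv_sumIndep_left_append_right d).symm

end SumIndep

section Shuffle

variable {α : Type} {L K : Set (List α)}

theorem nil_mem_shuffleLang : [] ∈ shuffleLang L K ↔ [] ∈ L ∧ [] ∈ K := by
  constructor
  · rintro ⟨_, hw, _, hv, ⟨⟩⟩
    exact ⟨hw, hv⟩
  · rintro ⟨hL, hK⟩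
    exact ⟨[], hL, [], hK, .nil⟩

theorem cons_mem_shuffleLang {a : α} {u : List α} :
    a :: u ∈ shuffleLang L K ↔
      u ∈ shuffleLang {w | a :: w ∈ L} K ∨ u ∈ shuffleLang L {v | a :: v ∈ K} := by
  constructor
  · rintro ⟨_, hw, _, hv, h | h | h⟩
    · exact .inl ⟨_, hw, _, hv, h⟩
    · exact .inr ⟨_, hw, _, hv, h⟩
  · rintro (⟨w, hw, v, hv, h⟩ | ⟨w, hw, v, hv, h⟩)
    · exact ⟨a :: w, hw, v, hv, .left h⟩
    · exact ⟨w, hw, a :: v, hv, .right h⟩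

end Shuffle

namespace PCGrammar

variable {α : Type} (G H : PCGrammar α) {a : α}

/-- The words derived from an arbitrary configuration, of which `PCGrammar.lang` is the case of the
start symbol. -/
def langFrom (γ : List G.V) : Set (List α) :=
  {w | PCDerives G γ w}

/-- A production step preceded by any number of swaps. -/
def Step (γ : List G.V) (a : α) (γ' : List G.V) : Prop :=
  ∃ X δ β, TraceEquiv G.indep γ (X :: β) ∧ (X, a, δ) ∈ G.prods ∧ γ' = δ ++ β

variable {G H}

instance symm_indep : Std.Symm G.indep :=
  ⟨fun _ _ => G.indep_symm⟩

theorem langFrom_eq_of_traceEquiv {γ δ : List G.V} (h : TraceEquiv G.indep γ δ) :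
    G.langFrom γ = G.langFrom δ := by
  induction h with
  | refl => rfl
  | tail _ hs ih =>
    obtain ⟨x, y, hXY⟩ := hs
    exact ih.trans (Set.Subset.antisymm (fun _ => .swap (G.indep_symm hXY)) fun _ => .swap hXY)

theorem nil_mem_langFrom {γ : List G.V} : [] ∈ G.langFrom γ ↔ γ = [] := by
  refine ⟨fun h => ?_, fun h => h ▸ .nil⟩
  change PCDerives G γ [] at h
  generalize hw : ([] : List α) = w at h
  induction h with
  | nil => rfl
  | prod => contradiction
  | swap _ _ ih => simpa using ih hw

theorem cons_mem_langFrom {γ : List G.V} {w : List α} :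
    a :: w ∈ G.langFrom γ ↔ ∃ γ', G.Step γ a γ' ∧ w ∈ G.langFrom γ' := by
  constructor
  · intro h
    change PCDerives G γ (a :: w) at h
    generalize hw : a :: w = w' at h
    induction h with
    | nil => contradiction
    | prod hp hd =>
      cases hw
      exact ⟨_, ⟨_, _, _, .refl, hp, rfl⟩, hd⟩
    | swap hXY _ ih =>
      obtain ⟨γ', ⟨X, δ, β, h, hp⟩, hd⟩ := ih hw
      exact ⟨γ', ⟨X, δ, β, h.head (.swap _ _ hXY), hp⟩, hd⟩
  · rintro ⟨_, ⟨X, δ, β, h, hp, rfl⟩, hd⟩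
    rw [langFrom_eq_of_traceEquiv h]
    exact .prod hp hd

theorem finite_setOf_step (γ : List G.V) : {p : α × List G.V | G.Step γ p.1 p.2}.Finite := by
  refine (G.finP.image2 (fun (_, a, δ) β => (a, δ ++ List.tail β))
    (TraceEquiv.finite_setOf (J := G.indep) γ)).subset ?_
  rintro ⟨a, _⟩ ⟨X, δ, β, h, hp, rfl⟩
  exact ⟨_, hp, _, h, rfl⟩

section WithInitial

/-- The grammar `G` started from the configuration `γ₀` instead of its start symbol. The new start
symbol `none` produces whatever a first step from `γ₀` can yield, so `γ₀` has to be nonempty for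
the two to agree. Making `none` independent of all other symbols keeps dependence transitive. -/
abbrev withInitial (G : PCGrammar α) (γ₀ : List G.V) : PCGrammar α where
  V := Option G.V
  finV := have := G.finV; inferInstance
  start := none
  prods := Prod.map some (Prod.map id (List.map some)) '' G.prods ∪
    (fun (a, δ) => (none, a, List.map some δ)) '' {p | G.Step γ₀ p.1 p.2}
  finP := (G.finP.image _).union ((finite_setOf_step γ₀).image _)
  indep
    | some X, some Y => G.indep X Y
    | none, none => False
    | _, _ => True
  indep_symm := by
    rintro (_ | X) (_ | Y) h
    exacts [h, trivial, trivial, G.indep_symm h]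
  indep_irrefl := by
    rintro (_ | X) h
    exacts [h, G.indep_irrefl X h]

variable {γ₀ : List G.V}

theorem some_mem_prods_withInitial {X : G.V} {δ : List (Option G.V)} :
    (some X, a, δ) ∈ (G.withInitial γ₀).prods ↔ ∃ γ, (X, a, γ) ∈ G.prods ∧ γ.map some = δ := by
  simp [withInitial]

theorem none_mem_prods_withInitial {δ : List (Option G.V)} :
    (none, a, δ) ∈ (G.withInitial γ₀).prods ↔ ∃ γ, G.Step γ₀ a γ ∧ γ.map some = δ := by
  simp [withInitial]

theorem step_withInitial_map_some {γ : List G.V} {δ : List (Option G.V)} :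
    (G.withInitial γ₀).Step (γ.map some) a δ ↔ ∃ γ', G.Step γ a γ' ∧ γ'.map some = δ := by
  constructor
  · rintro ⟨X, δ, β, h, hp, rfl⟩
    obtain ⟨ζ, hζ, hζβ⟩ := h.exists_of_map_left
    obtain ⟨X, β, rfl, rfl, rfl⟩ := List.map_eq_cons_iff.1 hζβ
    obtain ⟨δ, hδ, rfl⟩ := some_mem_prods_withInitial.1 hp
    exact ⟨δ ++ β, ⟨X, δ, β, hζ, hδ, rfl⟩, List.map_append⟩
  · rintro ⟨_, ⟨X, δ, β, h, hp, rfl⟩, rfl⟩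
    exact ⟨some X, δ.map some, β.map some,
      TraceEquiv.map (J := (G.withInitial γ₀).indep) (f := some) h,
      some_mem_prods_withInitial.2 ⟨δ, hp, rfl⟩, List.map_append⟩

theorem step_withInitial_none {δ : List (Option G.V)} :
    (G.withInitial γ₀).Step [none] a δ ↔ ∃ γ, G.Step γ₀ a γ ∧ γ.map some = δ := by
  rw [← none_mem_prods_withInitial]
  constructor
  · rintro ⟨X, δ, β, h, hp, rfl⟩
    obtain ⟨rfl, rfl⟩ := List.cons_eq_cons.1 (List.singleton_perm.1 h.perm)
    rwa [List.append_nil]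
  · exact fun h => ⟨none, δ, [], .refl, h, δ.append_nil.symm⟩

theorem langFrom_withInitial_map_some (γ : List G.V) :
    (G.withInitial γ₀).langFrom (γ.map some) = G.langFrom γ := by
  ext w
  induction w generalizing γ with
  | nil => rw [nil_mem_langFrom, nil_mem_langFrom, List.map_eq_nil_iff]
  | cons a w ih =>
    rw [cons_mem_langFrom, cons_mem_langFrom]
    constructor
    · rintro ⟨_, hs, hw⟩
      obtain ⟨γ', hγ, rfl⟩ := step_withInitial_map_some.1 hs
      exact ⟨γ', hγ, (ih γ').1 hw⟩
    · rintro ⟨γ', hs, hw⟩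
      exact ⟨_, step_withInitial_map_some.2 ⟨γ', hs, rfl⟩, (ih γ').2 hw⟩

theorem lang_withInitial (h₀ : γ₀ ≠ []) : (G.withInitial γ₀).lang = G.langFrom γ₀ := by
  ext w
  change w ∈ (G.withInitial γ₀).langFrom [none] ↔ _
  cases w with
  | nil => simp only [nil_mem_langFrom, List.cons_ne_nil, h₀]
  | cons a w =>
    rw [cons_mem_langFrom, cons_mem_langFrom]
    constructor
    · rintro ⟨_, hs, hw⟩
      obtain ⟨γ, hγ, rfl⟩ := step_withInitial_none.1 hs
      exact ⟨γ, hγ, langFrom_withInitial_map_some γ ▸ hw⟩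
    · rintro ⟨γ, hs, hw⟩
      exact ⟨_, step_withInitial_none.2 ⟨γ, hs, rfl⟩, (langFrom_withInitial_map_some γ).symm ▸ hw⟩

theorem depTransitive.withInitial (hG : G.depTransitive) (γ₀ : List G.V) :
    (G.withInitial γ₀).depTransitive := by
  rintro (_ | X) (_ | Y) (_ | Z) hXY hYZ
  case some.some.some => exact hG X Y Z hXY hYZ
  case none.none.none => exact hXY
  all_goals first | exact absurd trivial hXY | exact absurd trivial hYZ

end WithInitial

section Par

/-- The grammars `G` and `H` side by side, without interaction. It is only run from configurations
that hold a symbol of each, so the choice of `start` is immaterial. -/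
abbrev par (G H : PCGrammar α) : PCGrammar α where
  V := G.V ⊕ H.V
  finV := have := G.finV; have := H.finV; inferInstance
  start := .inl G.start
  prods := Prod.map .inl (Prod.map id (List.map .inl)) '' G.prods ∪
    Prod.map .inr (Prod.map id (List.map .inr)) '' H.prods
  finP := (G.finP.image _).union (H.finP.image _)
  indep := SumIndep G.indep H.indep
  indep_symm := symm_of (SumIndep G.indep H.indep)
  indep_irrefl := by
    rintro (X | X) h
    exacts [G.indep_irrefl X h, H.indep_irrefl X h]

theorem inl_mem_prods_par {X : G.V} {δ : List (G.V ⊕ H.V)} :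
    (.inl X, a, δ) ∈ (G.par H).prods ↔ ∃ γ, (X, a, γ) ∈ G.prods ∧ γ.map .inl = δ := by
  simp [par]

theorem inr_mem_prods_par {X : H.V} {δ : List (G.V ⊕ H.V)} :
    (.inr X, a, δ) ∈ (G.par H).prods ↔ ∃ γ, (X, a, γ) ∈ H.prods ∧ γ.map .inr = δ := by
  simp [par]

theorem traceEquiv_par_iff {c d : List (G.V ⊕ H.V)} :
    TraceEquiv (G.par H).indep c d ↔
      TraceEquiv G.indep (c.filterMap Sum.getLeft?) (d.filterMap Sum.getLeft?) ∧
        TraceEquiv H.indep (c.filterMap Sum.getRight?) (d.filterMap Sum.getRight?) :=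
  traceEquiv_sumIndep_iff

theorem Step.left_or_right_of_par {c c' : List (G.V ⊕ H.V)} (h : (G.par H).Step c a c') :
    (G.Step (c.filterMap Sum.getLeft?) a (c'.filterMap Sum.getLeft?) ∧
        TraceEquiv H.indep (c.filterMap Sum.getRight?) (c'.filterMap Sum.getRight?)) ∨
      (H.Step (c.filterMap Sum.getRight?) a (c'.filterMap Sum.getRight?) ∧
        TraceEquiv G.indep (c.filterMap Sum.getLeft?) (c'.filterMap Sum.getLeft?)) := by
  obtain ⟨X | X, δ, β, hc, hp, rfl⟩ := h <;> obtain ⟨hl, hr⟩ := traceEquiv_par_iff.1 hc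
  · obtain ⟨δ, hδ, rfl⟩ := inl_mem_prods_par.1 hp
    rw [List.filterMap_append, List.filterMap_append, filterMap_getLeft?_map_inl,
      filterMap_getRight?_map_inl]
    exact .inl ⟨⟨X, δ, _, hl, hδ, rfl⟩, hr⟩
  · obtain ⟨δ, hδ, rfl⟩ := inr_mem_prods_par.1 hp
    rw [List.filterMap_append, List.filterMap_append, filterMap_getLeft?_map_inr,
      filterMap_getRight?_map_inr]
    exact .inr ⟨⟨X, δ, _, hr, hδ, rfl⟩, hl⟩

theorem Step.exists_par_of_left {c : List (G.V ⊕ H.V)} {γ : List G.V}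
    (h : G.Step (c.filterMap Sum.getLeft?) a γ) :
    ∃ c', (G.par H).Step c a c' ∧ c'.filterMap Sum.getLeft? = γ ∧
      c'.filterMap Sum.getRight? = c.filterMap Sum.getRight? := by
  obtain ⟨X, δ, β, hc, hp, rfl⟩ := h
  have c_equiv : TraceEquiv (G.par H).indep c
      ((X :: β).map .inl ++ (c.filterMap Sum.getRight?).map .inr) := by
    rw [traceEquiv_par_iff]
    simp only [List.filterMap_append, filterMap_getLeft?_map_inl, filterMap_getLeft?_map_inr,
      filterMap_getRight?_map_inl, filterMap_getRight?_map_inr, List.append_nil, List.nil_append]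
    exact ⟨hc, .refl⟩
  refine ⟨δ.map .inl ++ (β.map .inl ++ (c.filterMap Sum.getRight?).map .inr),
    ⟨.inl X, δ.map .inl, _, c_equiv, inl_mem_prods_par.2 ⟨δ, hp, rfl⟩, rfl⟩, ?_, ?_⟩ <;>
  simp only [List.filterMap_append, filterMap_getLeft?_map_inl, filterMap_getLeft?_map_inr,
    filterMap_getRight?_map_inl, filterMap_getRight?_map_inr, List.append_nil, List.nil_append]

theorem Step.exists_par_of_right {c : List (G.V ⊕ H.V)} {γ : List H.V}
    (h : H.Step (c.filterMap Sum.getRight?) a γ) :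
    ∃ c', (G.par H).Step c a c' ∧ c'.filterMap Sum.getRight? = γ ∧
      c'.filterMap Sum.getLeft? = c.filterMap Sum.getLeft? := by
  obtain ⟨X, δ, β, hc, hp, rfl⟩ := h
  have c_equiv : TraceEquiv (G.par H).indep c
      ((X :: β).map .inr ++ (c.filterMap Sum.getLeft?).map .inl) := by
    rw [traceEquiv_par_iff]
    simp only [List.filterMap_append, filterMap_getLeft?_map_inl, filterMap_getLeft?_map_inr,
      filterMap_getRight?_map_inl, filterMap_getRight?_map_inr, List.append_nil, List.nil_append]
    exact ⟨.refl, hc⟩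
  refine ⟨δ.map .inr ++ (β.map .inr ++ (c.filterMap Sum.getLeft?).map .inl),
    ⟨.inr X, δ.map .inr, _, c_equiv, inr_mem_prods_par.2 ⟨δ, hp, rfl⟩, rfl⟩, ?_, ?_⟩ <;>
  simp only [List.filterMap_append, filterMap_getLeft?_map_inl, filterMap_getLeft?_map_inr,
    filterMap_getRight?_map_inl, filterMap_getRight?_map_inr, List.append_nil, List.nil_append]

theorem langFrom_par (c : List (G.V ⊕ H.V)) :
    (G.par H).langFrom c =
      shuffleLang (G.langFrom (c.filterMap Sum.getLeft?))
        (H.langFrom (c.filterMap Sum.getRight?)) := by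
  ext w
  induction w generalizing c with
  | nil =>
    simp only [nil_mem_shuffleLang, nil_mem_langFrom]
    exact eq_nil_iff_filterMap_getLeft?_getRight?
  | cons a w ih =>
    rw [cons_mem_langFrom, cons_mem_shuffleLang]
    constructor
    · rintro ⟨c', hs, hw⟩
      obtain ⟨u, hu, v, hv, huv⟩ := (ih c').1 hw
      rcases hs.left_or_right_of_par with ⟨hG, he⟩ | ⟨hH, he⟩
      · rw [langFrom_eq_of_traceEquiv he]
        exact .inl ⟨u, cons_mem_langFrom.2 ⟨_, hG, hu⟩, v, hv, huv⟩
      · rw [langFrom_eq_of_traceEquiv he]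
        exact .inr ⟨u, hu, v, cons_mem_langFrom.2 ⟨_, hH, hv⟩, huv⟩
    · rintro (⟨u, hu, v, hv, huv⟩ | ⟨u, hu, v, hv, huv⟩)
      · obtain ⟨γ, hγ, hu⟩ := cons_mem_langFrom.1 hu
        obtain ⟨c', hs, rfl, hr⟩ := hγ.exists_par_of_left
        exact ⟨c', hs, (ih c').2 ⟨u, hu, v, hr ▸ hv, huv⟩⟩
      · obtain ⟨γ, hγ, hv⟩ := cons_mem_langFrom.1 hv
        obtain ⟨c', hs, rfl, hl⟩ := hγ.exists_par_of_right
        exact ⟨c', hs, (ih c').2 ⟨u, hl ▸ hu, v, hv, huv⟩⟩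

theorem depTransitive.par (hG : G.depTransitive) (hH : H.depTransitive) :
    (G.par H).depTransitive := by
  rintro (X | X) (Y | Y) (Z | Z) hXY hYZ
  case inl.inl.inl => exact hG X Y Z hXY hYZ
  case inr.inr.inr => exact hH X Y Z hXY hYZ
  all_goals first | exact absurd trivial hXY | exact absurd trivial hYZ

end Par

/-- A grammar for the shuffle of the languages of `G` and `H`. -/
def shuffle (G H : PCGrammar α) : PCGrammar α :=
  (G.par H).withInitial [.inl G.start, .inr H.start]

theorem lang_shuffle (G H : PCGrammar α) : (G.shuffle H).lang = shuffleLang G.lang H.lang :=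
  (lang_withInitial (List.cons_ne_nil _ _)).trans (langFrom_par _)

theorem depTransitive.shuffle (hG : G.depTransitive) (hH : H.depTransitive) :
    (G.shuffle H).depTransitive :=
  (hG.par hH).withInitial _

end PCGrammar

theorem pccfl_trpccfl_closed_under_shuffle_general {α : Type} (L K : Set (List α)) :
    (IsPCCFL L → IsPCCFL K → IsPCCFL (shuffleLang L K)) ∧
    (IsTrPCCFL L → IsTrPCCFL K → IsTrPCCFL (shuffleLang L K)) := by
  constructor
  · rintro ⟨G, rfl⟩ ⟨H, rfl⟩
    exact ⟨G.shuffle H, G.lang_shuffle H⟩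
  · rintro ⟨G, hG, rfl⟩ ⟨H, hH, rfl⟩
    exact ⟨G.shuffle H, hG.shuffle hH, G.lang_shuffle H⟩

/-- PCCFL and trPCCFL are both closed under shuffle. -/
theorem pccfl_trpccfl_closed_under_shuffle (α : Type) [Finite α] (L K : Set (List α)) :
    (IsPCCFL L → IsPCCFL K → IsPCCFL (shuffleLang L K)) ∧
    (IsTrPCCFL L → IsTrPCCFL K → IsTrPCCFL (shuffleLang L K)) :=
  pccfl_trpccfl_closed_under_shuffle_general L K
end

section
/- PCCFL is closed under concatenation: if languages L and K (over the same finite alphabet) belong to PCCFL, then the concatenation L·K = { u·v : u ∈ L, v ∈ K } belongs to PCCFL. -/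
/-! Adjoin a fresh start symbol to disjoint copies of the two grammars `G` and `H`. It imitates the
productions of the start symbol of `G`, with the start symbol of `H` appended. Symbols of different
copies are dependent, so no symbol of `H` can be swapped past one of `G`: the `G`-part of a
configuration is consumed completely before any production is applied to the `H`-part, and the
generated word splits accordingly. -/

section Derivations

variable {α : Type} {G H : PCGrammar α}

theorem PCDerives.append_s17 {γ δ : List G.V} {u v : List α} (hγ : PCDerives G γ u)
    (hδ : PCDerives G δ v) : PCDerives G (γ ++ δ) (u ++ v) := by
  induction hγ with
  | nil => exact hδ
  | prod hp _ ih =>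
    rw [List.append_assoc] at ih
    exact .prod hp ih
  | swap hXY _ ih =>
    simp only [List.append_assoc, List.cons_append] at ih ⊢
    exact .swap hXY ih

theorem pcDerives_singleton_iff {X : G.V} {w : List α} :
    PCDerives G [X] w ↔ ∃ a γ w', (X, a, γ) ∈ G.prods ∧ PCDerives G γ w' ∧ w = a :: w' := by
  constructor
  · intro h
    generalize hc : [X] = c at h
    cases h with
    | nil => cases hc
    | prod hp h =>
      cases hc
      exact ⟨_, _, _, hp, by rwa [List.append_nil] at h, rfl⟩
    | swap => simp [List.singleton_eq_append_iff] at hc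
  · rintro ⟨a, γ, w', hp, h, rfl⟩
    exact .prod hp (by rwa [List.append_nil])

/-- A set of nonterminals is production-closed if its members only produce members, so that
rewriting a configuration over the set never leaves it. -/
def PCGrammar.IsProductionClosed (G : PCGrammar α) (A : Set G.V) : Prop :=
  ∀ ⦃X a γ⦄, (X, a, γ) ∈ G.prods → X ∈ A → ∀ Y ∈ γ, Y ∈ A

theorem PCDerives.exists_of_append {A : Set G.V} (hA : G.IsProductionClosed A)
    {γ δ : List G.V} {w : List α} (h : PCDerives G (γ ++ δ) w) (hγ : ∀ X ∈ γ, X ∈ A)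
    (hδ : ∀ X ∈ A, ∀ Y ∈ δ, ¬ G.indep X Y) :
    ∃ u v, PCDerives G γ u ∧ PCDerives G δ v ∧ w = u ++ v := by
  generalize hc : γ ++ δ = c at h
  induction h generalizing γ δ with
  | nil =>
    obtain ⟨rfl, rfl⟩ := List.append_eq_nil_iff.mp hc
    exact ⟨[], [], .nil, .nil, rfl⟩
  | @prod X a ζ β w hp h ih =>
    rcases List.append_eq_cons_iff.mp hc with ⟨rfl, rfl⟩ | ⟨γ, rfl, rfl⟩
    · exact ⟨[], a :: w, .nil, .prod hp h, rfl⟩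
    · obtain ⟨hX, hγ⟩ := List.forall_mem_cons.mp hγ
      obtain ⟨u, v, hu, hv, rfl⟩ := ih (γ := ζ ++ γ)
        (List.forall_mem_append.mpr ⟨hA hp hX, hγ⟩) hδ (List.append_assoc ..)
      exact ⟨a :: u, v, .prod hp hu, hv, rfl⟩
  | @swap η β X Y w hXY _ ih =>
    rcases List.append_eq_append_iff.mp hc with ⟨η, rfl, rfl⟩ | ⟨ξ, rfl, hξ⟩
    · obtain ⟨u, v, hu, hv, rfl⟩ := ih (δ := η ++ Y :: X :: β) hγ
        (by simpa [or_left_comm] using hδ) (by simp)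
      exact ⟨u, v, hu, .swap hXY hv, rfl⟩
    · match ξ, hξ with
      | [], hξ =>
        obtain rfl : X :: Y :: β = δ := hξ
        obtain ⟨u, v, hu, hv, rfl⟩ := ih (γ := η) (δ := Y :: X :: β)
          (by simpa using hγ) (by simpa [or_left_comm] using hδ) rfl
        exact ⟨u, v, by rwa [List.append_nil], .swap (η := []) hXY hv, rfl⟩
      | [_], hξ =>
        -- the swap would straddle the boundary between `γ` and `δ`
        cases hξ
        exact absurd hXY (hδ X (hγ X (by simp)) Y (by simp))
      | _ :: _ :: ξ, hξ =>
        cases hξ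
        obtain ⟨u, v, hu, hv, rfl⟩ := ih (γ := η ++ Y :: X :: ξ)
          (by simpa [or_left_comm] using hγ) hδ (by simp)
        exact ⟨u, v, .swap hXY hu, hv, rfl⟩

theorem pcDerives_append_iff {A : Set G.V} (hA : G.IsProductionClosed A) {γ δ : List G.V}
    {w : List α} (hγ : ∀ X ∈ γ, X ∈ A) (hδ : ∀ X ∈ A, ∀ Y ∈ δ, ¬ G.indep X Y) :
    PCDerives G (γ ++ δ) w ↔ ∃ u v, PCDerives G γ u ∧ PCDerives G δ v ∧ w = u ++ v := by
  constructor
  · exact fun h => h.exists_of_append hA hγ hδ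
  · rintro ⟨u, v, hu, hv, rfl⟩
    exact hu.append_s17 hv

/-- A map of nonterminals is a bisimulation map if it preserves and reflects productions and
independence; derivations can then be transported along it in both directions. -/
structure PCGrammar.IsBisimulationMap (f : G.V → H.V) : Prop where
  prod_iff {X : G.V} {a : α} {ζ : List H.V} :
    (f X, a, ζ) ∈ H.prods ↔ ∃ γ, (X, a, γ) ∈ G.prods ∧ γ.map f = ζ
  indep_iff {X Y : G.V} : H.indep (f X) (f Y) ↔ G.indep X Y

namespace PCGrammar.IsBisimulationMap

variable {f : G.V → H.V}

theorem pcDerives_map (hf : IsBisimulationMap f) {γ : List G.V} {w : List α}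
    (h : PCDerives G γ w) : PCDerives H (γ.map f) w := by
  induction h with
  | nil => exact .nil
  | prod hp _ ih => exact .prod (hf.prod_iff.mpr ⟨_, hp, rfl⟩) (by rwa [← List.map_append])
  | swap hXY _ ih =>
    simp only [List.map_append, List.map_cons] at ih ⊢
    exact .swap (hf.indep_iff.mpr hXY) ih

theorem pcDerives_of_map (hf : IsBisimulationMap f) {γ : List G.V} {w : List α}
    (h : PCDerives H (γ.map f) w) : PCDerives G γ w := by
  generalize hc : γ.map f = c at h
  induction h generalizing γ with
  | nil =>
    cases List.map_eq_nil_iff.mp hc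
    exact .nil
  | prod hp _ ih =>
    obtain ⟨X, β, rfl, rfl, rfl⟩ := List.map_eq_cons_iff.mp hc
    obtain ⟨ζ, hζ, rfl⟩ := hf.prod_iff.mp hp
    exact .prod hζ (ih List.map_append)
  | swap hXY _ ih =>
    obtain ⟨η, γ, rfl, rfl, hXYβ⟩ := List.map_eq_append_iff.mp hc
    obtain ⟨X, γ, rfl, rfl, hYβ⟩ := List.map_eq_cons_iff.mp hXYβ
    obtain ⟨Y, β, rfl, rfl, rfl⟩ := List.map_eq_cons_iff.mp hYβ
    exact .swap (hf.indep_iff.mp hXY) (ih (by simp))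

theorem pcDerives_map_iff (hf : IsBisimulationMap f) {γ : List G.V} {w : List α} :
    PCDerives H (γ.map f) w ↔ PCDerives G γ w :=
  ⟨hf.pcDerives_of_map, hf.pcDerives_map⟩

theorem isProductionClosed_range (hf : IsBisimulationMap f) :
    H.IsProductionClosed (Set.range f) := by
  rintro _ a ζ hp ⟨X, rfl⟩ Y hY
  obtain ⟨γ, -, rfl⟩ := hf.prod_iff.mp hp
  obtain ⟨Z, -, rfl⟩ := List.mem_map.mp hY
  exact ⟨Z, rfl⟩

end PCGrammar.IsBisimulationMap

end Derivations

namespace PCGrammar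

variable {α : Type} (G H : PCGrammar α)

/-- Independence in the concatenation grammar: that of the two components. Symbols of
different components are dependent, and so is the fresh start symbol `none` on every symbol. -/
def concatIndep : Option (G.V ⊕ H.V) → Option (G.V ⊕ H.V) → Prop
  | some (.inl X), some (.inl Y) => G.indep X Y
  | some (.inr X), some (.inr Y) => H.indep X Y
  | _, _ => False

/-- Productions of the concatenation grammar: those of the two components, and for each production
of `G.start` one of `none` with `H.start` appended. Productions consume a letter, so `none` cannot
simply be rewritten to `G.start H.start`. -/
def concatProds : Set (Option (G.V ⊕ H.V) × α × List (Option (G.V ⊕ H.V))) :=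
  (fun (X, a, γ) => (some (.inl X), a, γ.map (some ∘ .inl))) '' G.prods ∪
  (fun (X, a, γ) => (some (.inr X), a, γ.map (some ∘ .inr))) '' H.prods ∪
  (fun (_, a, γ) => (none, a, γ.map (some ∘ .inl) ++ [some (.inr H.start)])) ''
    {p ∈ G.prods | p.1 = G.start}

section concatProds

variable {G H} {a : α} {ζ : List (Option (G.V ⊕ H.V))}

theorem inl_mem_concatProds {X : G.V} :
    (some (.inl X), a, ζ) ∈ G.concatProds H ↔
      ∃ γ, (X, a, γ) ∈ G.prods ∧ γ.map (some ∘ .inl) = ζ := by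
  simp [concatProds]

theorem inr_mem_concatProds {X : H.V} :
    (some (.inr X), a, ζ) ∈ G.concatProds H ↔
      ∃ γ, (X, a, γ) ∈ H.prods ∧ γ.map (some ∘ .inr) = ζ := by
  simp [concatProds]

theorem none_mem_concatProds :
    (none, a, ζ) ∈ G.concatProds H ↔
      ∃ γ, (G.start, a, γ) ∈ G.prods ∧ γ.map (some ∘ .inl) ++ [some (.inr H.start)] = ζ := by
  simp [concatProds]

end concatProds

/-- The concatenation grammar: disjoint copies of `G` and `H` and a fresh start symbol `none`. The
fresh symbol is needed because `G.start` may reappear in the course of a derivation. -/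
def concat : PCGrammar α where
  V := Option (G.V ⊕ H.V)
  finV :=
    have := G.finV
    have := H.finV
    inferInstance
  start := none
  prods := G.concatProds H
  finP := ((G.finP.image _).union (H.finP.image _)).union ((G.finP.sep _).image _)
  indep := G.concatIndep H
  indep_symm {X Y} h :=
    match X, Y, h with
    | some (.inl _), some (.inl _), h => G.indep_symm h
    | some (.inr _), some (.inr _), h => H.indep_symm h
  indep_irrefl
    | some (.inl X) => G.indep_irrefl X
    | some (.inr X) => H.indep_irrefl X
    | none => id

/-- The copy in `G.concat H` of a nonterminal of `G`. -/
def concatLeft (X : G.V) : (G.concat H).V := some (.inl X)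

/-- The copy in `G.concat H` of a nonterminal of `H`. -/
def concatRight (X : H.V) : (G.concat H).V := some (.inr X)

theorem isBisimulationMap_concatLeft : IsBisimulationMap (concatLeft G H) where
  prod_iff := inl_mem_concatProds
  indep_iff := Iff.rfl

theorem isBisimulationMap_concatRight : IsBisimulationMap (concatRight G H) where
  prod_iff := inr_mem_concatProds
  indep_iff := Iff.rfl

theorem concat_start_mem_prods_iff {a : α} {ζ : List (G.concat H).V} :
    ((G.concat H).start, a, ζ) ∈ (G.concat H).prods ↔ ∃ γ, (G.start, a, γ) ∈ G.prods ∧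
      γ.map (concatLeft G H) ++ [H.start].map (concatRight G H) = ζ :=
  none_mem_concatProds

theorem not_indep_concatLeft_concatRight (X : G.V) (Y : H.V) :
    ¬ (G.concat H).indep (concatLeft G H X) (concatRight G H Y) :=
  id

variable {G H} in
theorem pcDerives_concat_iff {γ : List G.V} {δ : List H.V} {w : List α} :
    PCDerives (G.concat H) (γ.map (concatLeft G H) ++ δ.map (concatRight G H)) w ↔
      ∃ u v, PCDerives G γ u ∧ PCDerives H δ v ∧ w = u ++ v := by
  have hleft := isBisimulationMap_concatLeft G H
  have hright := isBisimulationMap_concatRight G H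
  rw [pcDerives_append_iff hleft.isProductionClosed_range]
  · simp only [hleft.pcDerives_map_iff, hright.pcDerives_map_iff]
  · exact List.forall_mem_map.mpr fun X _ => ⟨X, rfl⟩
  · rintro _ ⟨X, rfl⟩
    exact List.forall_mem_map.mpr fun Y _ => not_indep_concatLeft_concatRight G H X Y

theorem lang_concat : (G.concat H).lang = {w | ∃ u ∈ G.lang, ∃ v ∈ H.lang, w = u ++ v} := by
  ext w
  calc PCDerives (G.concat H) [(G.concat H).start] w
    _ ↔ ∃ a γ w', (G.start, a, γ) ∈ G.prods ∧ PCDerives (G.concat H)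
          (γ.map (concatLeft G H) ++ [H.start].map (concatRight G H)) w' ∧ w = a :: w' := by
      rw [pcDerives_singleton_iff]
      simp only [concat_start_mem_prods_iff]
      grind
    _ ↔ ∃ a γ w', (G.start, a, γ) ∈ G.prods ∧
          (∃ u v, PCDerives G γ u ∧ PCDerives H [H.start] v ∧ w' = u ++ v) ∧ w = a :: w' := by
      simp only [pcDerives_concat_iff]
    _ ↔ ∃ u, PCDerives G [G.start] u ∧ ∃ v, PCDerives H [H.start] v ∧ w = u ++ v := by
      simp only [pcDerives_singleton_iff (X := G.start)]
      grind

end PCGrammar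

theorem pccfl_closed_under_concat_general {α : Type} {L K : Set (List α)} (hL : IsPCCFL L)
    (hK : IsPCCFL K) : IsPCCFL {w | ∃ u ∈ L, ∃ v ∈ K, w = u ++ v} := by
  obtain ⟨G, rfl⟩ := hL
  obtain ⟨H, rfl⟩ := hK
  exact ⟨G.concat H, G.lang_concat H⟩

/-- PCCFL is closed under concatenation. -/
theorem pccfl_closed_under_concat (α : Type) [Finite α] (L K : Set (List α))
    (hL : IsPCCFL L) (hK : IsPCCFL K) :
    IsPCCFL {w | ∃ u ∈ L, ∃ v ∈ K, w = u ++ v} :=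
  pccfl_closed_under_concat_general hL hK
end
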